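/- arXiv:math/0302132 — 2 statements merged into one kernel-verified Lean document; each statement's English description precedes it below -/
import Mathlib

section
/- For the extended ternary quadratic residue code C_1 ⊆ (ℤ/3ℤ)^{24}, the symmetrized weight enumerator is swe_{C_1}(x_0,z) = z^{24} + 4048·x_0^9·z^{15} + 61824·x_0^{12}·z^{12} + 242880·x_0^{15}·z^9 + 198352·x_0^{18}·z^6 + 24288·x_0^{21}·z^3 + 48·x_0^{24}. -/
/-! The weight distribution is forced by three properties of the code (`IsGoodCode`): it is self-dual
of dimension 12, and it has no nonzero word of weight at most 6.

* Self-orthogonality makes all weights divisible by 3, since `t * t = 1` for every nonzero `t` in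
  `ZMod 3`. Hence only the weights 0, 9, 12, 15, 18, 21, 24 occur.
* Self-duality and the distance bound show that any `t ≤ 6` coordinates are independent on the code
  (`IsGoodCode.card_vanishing`): a relation between them would be a word of weight at most 6 of the
  dual code. Counting pairs (codeword, `t`-set of its zeros) in two ways gives
  `∑ x ∈ C, (24 - wt x).choose t = (24.choose t) * 3 ^ (12 - t)` (`IsGoodCode.moment`).
* For `t = 0, …, 5` these are six linear equations for the six unknown multiplicities, with a unique
  solution (`IsGoodCode.sum_eq`).

There are two candidates for `g`, because `x ^ 23 - 1 = (x - 1) * g * g'` with explicit `g` and `g'`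
(`eq_digitPoly`). For each of them the code is the row space of the extended shifts of `g`
(`mem_iff_vecMul`), and tables provide generator matrices `R`, `R'` that are systematic on two
complementary sets of 12 positions. A word of weight at most 6 has at most 3 nonzero symbols on one
of these sets, so it is a combination of at most 3 rows of `R` or of `R'`. The enumeration of those
few combinations proves the distance bound (`isGoodCode`).
-/

open MvPolynomial
open scoped Classical

noncomputable section

/-- The symmetrized weight enumerator of a code `C ⊆ (ℤ/Nℤ)^n` (for `N = p^m`):
the variable `X i` for `i < m` records the number of coordinates of `p`-adic valuation `i`,
and the last variable `X m` (the variable `z`) records the number of zero coordinates. -/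
def swe (p m : ℕ) {N n : ℕ} [NeZero N]
    (C : Submodule (ZMod N) (Fin n → ZMod N)) : MvPolynomial (Fin (m + 1)) ℚ :=
  ∑ c : Fin n → ZMod N, if c ∈ C then
      (∏ i : Fin m, (X (Fin.castSucc i) : MvPolynomial (Fin (m + 1)) ℚ) ^
          (Finset.univ.filter fun j => c j ≠ 0 ∧ padicValNat p (c j).val = (i : ℕ)).card)
        * (X (Fin.last m) : MvPolynomial (Fin (m + 1)) ℚ) ^
            (Finset.univ.filter fun j => c j = 0).card
    else 0

/-- `g` is a monic irreducible degree-11 factor of `x^23 - 1` over `ℤ/pℤ`. -/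
def IsQRFactor (p : ℕ) (g : Polynomial (ZMod p)) : Prop :=
  g.Monic ∧ g.natDegree = 11 ∧ Irreducible g ∧ g ∣ (Polynomial.X ^ 23 - 1)

/-- `gm` is the (Hensel) lift of `g` to `ℤ/Nℤ` and `C` is the associated lifted extended
cyclic quadratic residue code of length 24: the extension by an overall parity check of the
cyclic code of length 23 generated by `gm`. -/
def IsLiftedQR {p N : ℕ} (hpN : p ∣ N) (g : Polynomial (ZMod p)) (gm : Polynomial (ZMod N))
    (C : Submodule (ZMod N) (Fin 24 → ZMod N)) : Prop :=
  gm.Monic ∧ gm.natDegree = 11 ∧ gm ∣ (Polynomial.X ^ 23 - 1) ∧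
    gm.map (ZMod.castHom hpN (ZMod p)) = g ∧
    ∀ c : Fin 24 → ZMod N, c ∈ C ↔
      ((∃ f : Polynomial (ZMod N), ∀ j : Fin 23,
          c (Fin.castSucc j) = ((f * gm) %ₘ (Polynomial.X ^ 23 - 1)).coeff (j : ℕ)) ∧
        c (Fin.last 23) = - ∑ j : Fin 23, c (Fin.castSucc j))

/-! ### Tables of ternary digits -/

/-- The coefficient of `10 ^ j` in the decimal expansion of `N`. Vectors over `ZMod 3` are stored
as numerals whose digits, read from the right, are the coordinates. -/
def digit (N j : ℕ) : ℕ := N / 10 ^ j % 10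

/-- The matrix over `ZMod 3` whose `i`-th row is given by the digits of the `i`-th entry of `L`. -/
def mat (n : ℕ) (L : List ℕ) : Matrix (Fin 12) (Fin n) (ZMod 3) :=
  fun i j => (digit (L.getD i 0) j : ZMod 3)

/-- The Hamming weight of a word of length 24. -/
def wt (c : Fin 24 → ZMod 3) : ℕ := (Finset.univ.filter fun j => c j ≠ 0).card

/-- The position of the `k`-th symbol of the first information set `{11, …, 22}`. -/
def infoPos (k : Fin 12) : Fin 24 := ⟨k + 11, by omega⟩

/-- The position of the `k`-th symbol of the complementary information set `{0, …, 10, 23}`. -/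
def coPos (k : Fin 12) : Fin 24 := if k = 11 then 23 else ⟨k, by omega⟩

/-- The number of `j < n` with `w j` not divisible by 3. -/
def weightBelow (w : ℕ → ℕ) : ℕ → ℕ
  | 0 => 0
  | n + 1 => weightBelow w n + bif (w n % 3).beq 0 then 0 else 1

/-- Exhaustive search: every sum of `w` and a combination of at most `b` of the rows in the list
with coefficients `1` or `2` has (modulo 3) weight `0` or at least `7`. -/
def sparseCheck : List ℕ → (ℕ → ℕ) → ℕ → Bool
  | [], w, _ => (weightBelow w 24).beq 0 || (7).ble (weightBelow w 24)
  | _ :: _, w, 0 => (weightBelow w 24).beq 0 || (7).ble (weightBelow w 24)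
  | r :: L, w, b + 1 =>
    sparseCheck L w (b + 1) && (sparseCheck L (fun j => w j + digit r j) b &&
      sparseCheck L (fun j => w j + 2 * digit r j) b)

/-- The finitely many numerical facts about a degree-11 factor `g` of `x ^ 23 - 1` that enter the
argument. `G` lists the shifts of `g`, extended by a parity check; `R` and `R'` are the generator
matrices of the same code that are systematic on `infoPos` and on `coPos`, and `P`, `P'` are the
base changes from `G` to them. -/
structure IsQRTable (g : ℕ) (G P R P' R' : List ℕ) : Prop where
  lt : g < 10 ^ 12
  shift : ∀ (i : Fin 12) (j : Fin 23),
    mat 24 G i j.castSucc = if (i : ℕ) ≤ j then (digit g (j - i) : ZMod 3) else 0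
  parity : ∀ i : Fin 12, mat 24 G i (Fin.last 23) = -∑ j : Fin 23, mat 24 G i j.castSucc
  mulR : mat 12 P * mat 24 G = mat 24 R
  mulR' : mat 12 P' * mat 24 G = mat 24 R'
  factorR : (mat 24 G).submatrix id infoPos * mat 24 R = mat 24 G
  factorR' : (mat 24 G).submatrix id coPos * mat 24 R' = mat 24 G
  idR : (mat 24 R).submatrix id infoPos = 1
  idR' : (mat 24 R').submatrix id coPos = 1
  orth : mat 24 R * (mat 24 R).transpose = 0
  lenR : R.length = 12
  lenR' : R'.length = 12
  checkR : sparseCheck R (fun _ => 0) 3 = true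
  checkR' : sparseCheck R' (fun _ => 0) 3 = true

theorem table_one : IsQRTable 111220101002
    [100000000000111220101002, 100000000001112201010020, 100000000011122010100200,
      100000000111220101002000, 100000001112201010020000, 100000011122010100200000,
      100000111220101002000000, 100001112201010020000000, 100011122010100200000000,
      100111220101002000000000, 101112201010020000000000, 111122010100200000000000]
    [1, 12, 120, 1202, 12021, 120212, 1202121, 12021211, 120212110, 1202121101, 12021211010,
      120212110100]
    [100000000000111220101002, 1001011212021, 10010112120210, 200000000100020201101101,
      1000010201112012, 200000010000021121022121, 100000022100022212, 100001000000002220020122,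
      100010000000022200201220, 200100000000000222110202, 201000000000002221102020,
      210000000000022211020200]
    [1212202002, 12122020020, 121220200200, 12202002000, 122020020000, 20200200000, 202002000000,
      220020000000, 100200000000, 102000000000, 120000000000, 100000000000]
    [101121202100000000001, 1011212021000000000010, 10112120210000000000100,
      1020111201200000001000, 10201112012000000010000, 2210002221200000100000,
      22100022212000001000000, 21101010022100010000000, 11111221120100100000000,
      11011120002201000000000, 10010112120210000000000, 111122010100200000000000] := by
  constructor <;> decide +kernel

theorem table_two : IsQRTable 100202011222
    [200000000000100202011222, 200000000001002020112220, 200000000010020201122200,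
      200000000100202011222000, 200000001002020112220000, 200000010020201122200000,
      200000100202011222000000, 200001002020112220000000, 200010020201122200000000,
      200100202011222000000000, 201002020112220000000000, 210020201122200000000000]
    [1, 10, 100, 1001, 10010, 100101, 1001011, 10010112, 100101121, 1001011212, 10010112120,
      100101121202]
    [200000000000100202011222, 200000000001002020112220, 200000000010020201122200,
      100000000100002210200222, 100000001000022102002220, 10000021222000122,
      200000100000012122012112, 1000000021021110201, 200010000000010110110202,
      100000000001202121101, 1000000000012021211010, 110000000000020010102211]
    [202022121012, 220221210120, 102212101200, 122121012000, 21210120000, 212101200000,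
      21012000000, 210120000000, 1200000000, 12000000000, 120000000000, 200000000000]
    [20212110100100000000001, 22000211101100000000010, 10211221111100000000100,
      12200101011200000001000, 2122200012200000010000, 21222000122000000100000,
      2102111020100001000000, 21021110201000010000000, 120212110100100000000,
      1202121101001000000000, 12021211010010000000000, 120010102211100000000000] := by
  constructor <;> decide +kernel

/-! ### The code in terms of generator matrices -/

/-- The polynomial over `ZMod 3` whose coefficients are the first 12 digits of `N`. -/
def digitPoly (N : ℕ) : Polynomial (ZMod 3) :=
  ∑ k ∈ Finset.range 12, Polynomial.C (digit N k : ZMod 3) * Polynomial.X ^ k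

theorem coeff_digitPoly {N : ℕ} (hN : N < 10 ^ 12) (k : ℕ) :
    (digitPoly N).coeff k = (digit N k : ZMod 3) := by
  unfold digitPoly
  simp only [Polynomial.finsetSum_coeff, Polynomial.coeff_C_mul, Polynomial.coeff_X_pow,
    mul_ite, mul_one, mul_zero, Finset.sum_ite_eq, Finset.mem_range]
  split_ifs with h
  · rfl
  · have : N < 10 ^ k := hN.trans_le (Nat.pow_le_pow_right (by norm_num) (by omega))
    simp [digit, Nat.div_eq_of_lt this]

theorem coeff_mul_digitPoly {N : ℕ} (hN : N < 10 ^ 12) (q : Polynomial (ZMod 3))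
    (hq : q.degree < 12) (j : ℕ) :
    (q * digitPoly N).coeff j = ∑ i : Fin 12,
      q.coeff i * (if (i : ℕ) ≤ j then (digit N (j - i) : ZMod 3) else 0) := by
  have hq' : q = ∑ i : Fin 12, Polynomial.C (q.coeff i) * Polynomial.X ^ (i : ℕ) :=
    (Polynomial.as_sum_range_C_mul_X_pow' (n := 12) (p := q) (by
      by_cases h0 : q = 0
      · simp [h0]
      · exact (Polynomial.natDegree_lt_iff_degree_lt h0).2 hq)).trans
      (Finset.sum_range fun i => Polynomial.C (q.coeff i) * Polynomial.X ^ i)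
  conv_lhs => rw [hq', Finset.sum_mul, Polynomial.finsetSum_coeff]
  refine Finset.sum_congr rfl fun i _ => ?_
  rw [mul_assoc, Polynomial.coeff_C_mul, Polynomial.coeff_X_pow_mul']
  split_ifs
  · rw [coeff_digitPoly hN]
  · rfl

/-- Since `3 = 0`, the integral identity below is `x ^ 23 - 1 = (x - 1) * g * g'` over `ZMod 3`,
and an irreducible degree-11 factor has to be one of the two explicit polynomials. -/
theorem eq_digitPoly {g : Polynomial (ZMod 3)} (hg : IsQRFactor 3 g) :
    g = digitPoly 111220101002 ∨ g = digitPoly 100202011222 := by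
  obtain ⟨hm, hd, hirr, hdvd⟩ := hg
  have h3 : (3 : Polynomial (ZMod 3)) = 0 := by
    have : (3 : ZMod 3) = 0 := rfl
    rw [← Polynomial.C_ofNat, this, Polynomial.C_0]
  have e1 : digitPoly 111220101002 = (Polynomial.X ^ 11 + Polynomial.X ^ 10 + Polynomial.X ^ 9
      + 2 * Polynomial.X ^ 8 + 2 * Polynomial.X ^ 7 + Polynomial.X ^ 5 + Polynomial.X ^ 3 + 2) := by
    simp [digitPoly, Finset.sum_range_succ, digit]
    ring
  have e2 : digitPoly 100202011222 = (Polynomial.X ^ 11 + 2 * Polynomial.X ^ 8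
      + 2 * Polynomial.X ^ 6 + Polynomial.X ^ 4 + Polynomial.X ^ 3 + 2 * Polynomial.X ^ 2
      + 2 * Polynomial.X + 2) := by
    simp [digitPoly, Finset.sum_range_succ, digit]
    ring
  have hfac : (Polynomial.X ^ 23 - 1 : Polynomial (ZMod 3))
      = (Polynomial.X - 1) * (digitPoly 111220101002 * digitPoly 100202011222) := by
    rw [e1, e2]
    linear_combination (-(-1 - Polynomial.X ^ 6 - 2 * Polynomial.X ^ 8 + Polynomial.X ^ 10
      - 2 * Polynomial.X ^ 11 + 3 * Polynomial.X ^ 12 - Polynomial.X ^ 13 + Polynomial.X ^ 14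
      + Polynomial.X ^ 17 + Polynomial.X ^ 20)) * h3
  have m1 : (digitPoly 111220101002).Monic ∧ (digitPoly 111220101002).natDegree = 11 := by
    rw [e1]
    constructor
    · monicity!
    · compute_degree!
  have m2 : (digitPoly 100202011222).Monic ∧ (digitPoly 100202011222).natDegree = 11 := by
    rw [e2]
    constructor
    · monicity!
    · compute_degree!
  rw [hfac] at hdvd
  rcases hirr.prime.dvd_or_dvd hdvd with h | h
  · exfalso
    have := Polynomial.natDegree_le_of_dvd h (Polynomial.X_sub_C_ne_zero (1 : ZMod 3))
    have h1 : (Polynomial.X - 1 : Polynomial (ZMod 3)).natDegree = 1 :=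
      Polynomial.natDegree_X_sub_C (1 : ZMod 3)
    omega
  · rcases hirr.prime.dvd_or_dvd h with h | h
    · exact .inl (Polynomial.eq_of_monic_of_dvd_of_natDegree_le hm m1.1 h (by omega)).symm
    · exact .inr (Polynomial.eq_of_monic_of_dvd_of_natDegree_le hm m2.1 h (by omega)).symm

/-- A cyclic code generated by a divisor `g` of `x ^ 23 - 1` of degree 11 consists of the products
`q * g` with `deg q < 12`. -/
theorem mem_iff_vecMul {n : ℕ} {G P R P' R' : List ℕ} (hT : IsQRTable n G P R P' R')
    (hm : (digitPoly n).Monic) (hd : (digitPoly n).natDegree = 11)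
    (hdvd : digitPoly n ∣ Polynomial.X ^ 23 - 1) (c : Fin 24 → ZMod 3) :
    ((∃ f : Polynomial (ZMod 3), ∀ j : Fin 23, c (Fin.castSucc j) =
        ((f * digitPoly n) %ₘ (Polynomial.X ^ 23 - 1)).coeff (j : ℕ)) ∧
      c (Fin.last 23) = - ∑ j : Fin 23, c (Fin.castSucc j)) ↔
    ∃ u : Fin 12 → ZMod 3, c = Matrix.vecMul u (mat 24 G) := by
  have hX : (Polynomial.X ^ 23 - 1 : Polynomial (ZMod 3)).Monic := by monicity!
  have hXd : (Polynomial.X ^ 23 - 1 : Polynomial (ZMod 3)).degree = 23 := by compute_degree!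
  have hdeg : (digitPoly n).degree = 11 := by
    rw [Polynomial.degree_eq_natDegree hm.ne_zero, hd]; rfl
  have hlast : ∀ u : Fin 12 → ZMod 3, Matrix.vecMul u (mat 24 G) (Fin.last 23) =
      -∑ j : Fin 23, Matrix.vecMul u (mat 24 G) j.castSucc := by
    intro u
    simp only [Matrix.vecMul, dotProduct, hT.parity]
    rw [Finset.sum_comm, ← Finset.sum_neg_distrib]
    simp only [mul_neg, Finset.mul_sum]
  have hinit : ∀ q : Polynomial (ZMod 3), q.degree < 12 → ∀ j : Fin 23,
      (q * digitPoly n).coeff j = Matrix.vecMul (fun i : Fin 12 => q.coeff i) (mat 24 G)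
        j.castSucc := by
    intro q hq j
    rw [coeff_mul_digitPoly hT.lt q hq]
    simp only [Matrix.vecMul, dotProduct, hT.shift]
  constructor
  · rintro ⟨⟨f, hf⟩, hl⟩
    have hdv : digitPoly n ∣ (f * digitPoly n) %ₘ (Polynomial.X ^ 23 - 1) := by
      rw [Polynomial.modByMonic_eq_sub_mul_div _ (Polynomial.X ^ 23 - 1)]
      exact dvd_sub (dvd_mul_left _ _) (hdvd.mul_right _)
    obtain ⟨q, hq⟩ := hdv
    rw [mul_comm (digitPoly n) q] at hq
    have hqd : q.degree < 12 := by
      have h := Polynomial.degree_modByMonic_lt (f * digitPoly n) hX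
      rw [hq, Polynomial.degree_mul, hdeg, hXd] at h
      by_contra! h'
      have := add_le_add_left h' (11 : WithBot ℕ)
      exact absurd (lt_of_le_of_lt this h) (by decide)
    refine ⟨fun i => q.coeff i, ?_⟩
    have h1 : ∀ j : Fin 23, c j.castSucc =
        Matrix.vecMul (fun i : Fin 12 => q.coeff i) (mat 24 G) j.castSucc := fun j => by
      rw [hf j, hq, hinit q hqd]
    ext j
    refine Fin.lastCases ?_ (fun j => h1 j) j
    rw [hl, hlast]
    simp only [h1]
  · rintro ⟨u, rfl⟩
    refine ⟨⟨∑ i : Fin 12, Polynomial.C (u i) * Polynomial.X ^ (i : ℕ), fun j => ?_⟩, hlast u⟩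
    have hqd : (∑ i : Fin 12, Polynomial.C (u i) * Polynomial.X ^ (i : ℕ)).degree < 12 :=
      Polynomial.degree_sum_fin_lt u
    have hqc : (fun i : Fin 12 => (∑ i : Fin 12,
        Polynomial.C (u i) * Polynomial.X ^ (i : ℕ)).coeff i) = u := by
      ext i
      simp [Polynomial.coeff_X_pow, Fin.val_inj]
    rw [(Polynomial.modByMonic_eq_self_iff hX).2, hinit _ hqd, hqc]
    rw [Polynomial.degree_mul, hdeg, hXd]
    have := WithBot.add_lt_add_right (z := (11 : WithBot ℕ)) (by decide) hqd
    exact this.trans_eq (by decide)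

/-! ### Minimum distance and self-duality -/

theorem weightBelow_eq (w : ℕ → ℕ) (n : ℕ) :
    weightBelow w n = ∑ j ∈ Finset.range n, if (w j : ZMod 3) ≠ 0 then 1 else 0 := by
  induction n with
  | zero => rfl
  | succ n ih =>
    rw [weightBelow, Finset.sum_range_succ, ih]
    congr 1
    by_cases h : w n % 3 = 0
    · have : (w n : ZMod 3) = 0 := (ZMod.natCast_eq_zero_iff _ _).2 (Nat.dvd_of_mod_eq_zero h)
      simp [h, this]
    · have : (w n : ZMod 3) ≠ 0 := fun h' =>
        h (Nat.mod_eq_zero_of_dvd ((ZMod.natCast_eq_zero_iff _ _).1 h'))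
      have hb : (w n % 3).beq 0 = false := by
        cases hb : (w n % 3).beq 0 with
        | false => rfl
        | true => exact absurd (Nat.eq_of_beq_eq_true hb) h
      simp [hb, this]

theorem sparseCheck_sound (L : List ℕ) : ∀ (w : ℕ → ℕ) (b : ℕ), sparseCheck L w b = true →
    ∀ a : ℕ → ZMod 3, (∑ i ∈ Finset.range L.length, if a i ≠ 0 then 1 else 0) ≤ b →
    ∀ x : Fin 24 → ZMod 3, (∀ j : Fin 24, x j = (w j : ZMod 3) +
        ∑ i ∈ Finset.range L.length, a i * (digit (L.getD i 0) j : ZMod 3)) →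
      wt x = 0 ∨ 7 ≤ wt x := by
  have key : ∀ (w : ℕ → ℕ) (x : Fin 24 → ZMod 3), (∀ j : Fin 24, x j = (w j : ZMod 3)) →
      ((weightBelow w 24).beq 0 || (7).ble (weightBelow w 24)) = true → wt x = 0 ∨ 7 ≤ wt x := by
    intro w x hx h
    have : wt x = weightBelow w 24 := by
      rw [weightBelow_eq, wt, Finset.card_filter, Finset.sum_range]
      simp only [hx]
    rw [this]
    simpa using h
  induction L with
  | nil =>
    intro w b h a _ x hx
    exact key w x (fun j => by simpa using hx j) h
  | cons r L ih =>
    intro w b h a ha x hx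
    cases b with
    | zero =>
      refine key w x (fun j => ?_) h
      rw [hx j, Finset.sum_eq_zero, add_zero]
      intro i hi
      have := Finset.sum_eq_zero_iff.1 (Nat.le_zero.1 ha) i hi
      have h0 : a i = 0 := by by_contra h; simp [h] at this
      rw [h0, zero_mul]
    | succ b =>
      rw [sparseCheck, Bool.and_eq_true, Bool.and_eq_true] at h
      rw [List.length_cons, Finset.sum_range_succ'] at ha
      simp only [List.length_cons, Finset.sum_range_succ', List.getD_cons_succ,
        List.getD_cons_zero] at hx
      obtain ⟨h0, h1, h2⟩ := h
      have h3 : a 0 = 0 ∨ a 0 = 1 ∨ a 0 = 2 := by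
        generalize a 0 = t; revert t; decide
      rcases h3 with e | e | e
      · refine ih w (b + 1) h0 (fun i => a (i + 1)) (by simpa [e] using ha) x fun j => ?_
        rw [hx j, e]; ring
      · refine ih _ b h1 (fun i => a (i + 1)) (by simpa [e] using ha) x fun j => ?_
        rw [hx j, e]; push_cast; ring
      · have e' : a 0 ≠ 0 := by rw [e]; decide
        refine ih _ b h2 (fun i => a (i + 1)) (by simpa [e'] using ha) x fun j => ?_
        rw [hx j, e]; push_cast; ring

theorem wt_vecMul_of_sparse {L : List ℕ} (hL : L.length = 12)
    (hc : sparseCheck L (fun _ => 0) 3 = true) (u : Fin 12 → ZMod 3)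
    (hu : (Finset.univ.filter fun i => u i ≠ 0).card ≤ 3) :
    wt (Matrix.vecMul u (mat 24 L)) = 0 ∨ 7 ≤ wt (Matrix.vecMul u (mat 24 L)) := by
  refine sparseCheck_sound L _ 3 hc (fun i => if h : i < 12 then u ⟨i, h⟩ else 0) ?_ _ fun j => ?_
  · rw [hL, Finset.sum_range]
    rw [Finset.card_filter] at hu
    simpa using hu
  · rw [hL, Finset.sum_range]
    simp [Matrix.vecMul, dotProduct, mat]

theorem wt_eq_zero {c : Fin 24 → ZMod 3} (h : wt c = 0) : c = 0 := by
  ext j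
  by_contra hj
  exact absurd (Finset.card_eq_zero.1 h) (Finset.ne_empty_of_mem (a := j) (by simpa using hj))

/-- The two information sets partition the 24 positions. -/
theorem sum_split {M : Type*} [AddCommMonoid M] (φ : Fin 24 → M) :
    ∑ j, φ j = ∑ k, φ (infoPos k) + ∑ k, φ (coPos k) := by
  have hi : Function.Injective infoPos := by decide
  have hc : Function.Injective coPos := by decide
  have hu : (Finset.univ : Finset (Fin 24)) =
      Finset.univ.image infoPos ∪ Finset.univ.image coPos := by decide
  have hd : Disjoint ((Finset.univ : Finset (Fin 12)).image infoPos)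
      (Finset.univ.image coPos) := by decide
  rw [hu, Finset.sum_union hd, Finset.sum_image hi.injOn, Finset.sum_image hc.injOn]

theorem wt_split (c : Fin 24 → ZMod 3) :
    wt c = (Finset.univ.filter fun k => c (infoPos k) ≠ 0).card +
      (Finset.univ.filter fun k => c (coPos k) ≠ 0).card := by
  simp only [wt, Finset.card_filter]
  exact sum_split fun j => if c j ≠ 0 then 1 else 0

/-- The properties of the code from which the weight distribution is derived: it is self-dual of
dimension 12 and has no nonzero word of weight at most 6. -/
structure IsGoodCode (C : Submodule (ZMod 3) (Fin 24 → ZMod 3)) : Prop where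
  finrank : Module.finrank (ZMod 3) C = 12
  orth : ∀ x ∈ C, ∀ y ∈ C, x ⬝ᵥ y = 0
  dual : ∀ y, (∀ x ∈ C, x ⬝ᵥ y = 0) → y ∈ C
  dist : ∀ x ∈ C, wt x ≤ 6 → x = 0

theorem isGoodCode {n : ℕ} {G P R P' R' : List ℕ} (hT : IsQRTable n G P R P' R')
    (C : Submodule (ZMod 3) (Fin 24 → ZMod 3))
    (hC : ∀ c, c ∈ C ↔ ∃ u : Fin 12 → ZMod 3, c = Matrix.vecMul u (mat 24 G)) :
    IsGoodCode C := by
  have memR : ∀ u, Matrix.vecMul u (mat 24 R) ∈ C := fun u =>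
    (hC _).2 ⟨Matrix.vecMul u (mat 12 P), by rw [Matrix.vecMul_vecMul, hT.mulR]⟩
  have memR' : ∀ u, Matrix.vecMul u (mat 24 R') ∈ C := fun u =>
    (hC _).2 ⟨Matrix.vecMul u (mat 12 P'), by rw [Matrix.vecMul_vecMul, hT.mulR']⟩
  have infoR : ∀ u k, Matrix.vecMul u (mat 24 R) (infoPos k) = u k := fun u k => by
    have := congrFun (congrArg (Matrix.vecMul u) hT.idR) k
    rwa [Matrix.vecMul_one] at this
  have infoR' : ∀ u k, Matrix.vecMul u (mat 24 R') (coPos k) = u k := fun u k => by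
    have := congrFun (congrArg (Matrix.vecMul u) hT.idR') k
    rwa [Matrix.vecMul_one] at this
  have eqR : ∀ c ∈ C, c = Matrix.vecMul (fun k => c (infoPos k)) (mat 24 R) := by
    intro c hc
    obtain ⟨u, rfl⟩ := (hC c).1 hc
    conv_lhs => rw [← hT.factorR, ← Matrix.vecMul_vecMul]
    rfl
  have eqR' : ∀ c ∈ C, c = Matrix.vecMul (fun k => c (coPos k)) (mat 24 R') := by
    intro c hc
    obtain ⟨u, rfl⟩ := (hC c).1 hc
    conv_lhs => rw [← hT.factorR', ← Matrix.vecMul_vecMul]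
    rfl
  have horth : ∀ x ∈ C, ∀ y ∈ C, x ⬝ᵥ y = 0 := by
    intro x hx y hy
    rw [eqR x hx, eqR y hy, ← Matrix.mulVec_transpose (mat 24 R) (fun k => y (infoPos k)),
      Matrix.dotProduct_mulVec, Matrix.vecMul_vecMul, hT.orth, Matrix.vecMul_zero,
      zero_dotProduct]
  refine ⟨?_, horth, ?_, ?_⟩
  · have hr : C = LinearMap.range (Matrix.vecMulLinear (mat 24 R)) := by
      ext c
      constructor
      · intro hc
        refine LinearMap.mem_range.2 ⟨fun k => c (infoPos k), ?_⟩
        rw [Matrix.vecMulLinear_apply]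
        exact (eqR c hc).symm
      · rintro ⟨u, rfl⟩
        rw [Matrix.vecMulLinear_apply]
        exact memR u
    rw [hr, LinearMap.finrank_range_of_inj]
    · simp
    · intro u v huv
      ext k
      rw [← infoR u k, ← infoR v k]
      exact congrFun (by simpa only [Matrix.vecMulLinear_apply] using huv) (infoPos k)
  · intro y hy
    -- Subtracting a codeword, one may assume that `y` vanishes on `coPos`; orthogonality to the
    -- rows of `R` then kills the coordinates on `infoPos`.
    set z := y - Matrix.vecMul (fun k => y (coPos k)) (mat 24 R') with hz
    have hzo : ∀ x ∈ C, x ⬝ᵥ z = 0 := fun x hx => by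
      rw [hz, dotProduct_sub, hy x hx, horth x hx _ (memR' _), sub_zero]
    have hco : ∀ k, z (coPos k) = 0 := fun k => by
      rw [hz, Pi.sub_apply, infoR', sub_self]
    have hinf : ∀ k, z (infoPos k) = 0 := fun k => by
      have h := hzo _ (memR (Pi.single k 1))
      rw [dotProduct, sum_split] at h
      simpa [infoR, hco, Pi.single_apply] using h
    have : z = 0 := by
      have h0 : wt z = 0 := by rw [wt_split]; simp [hco, hinf]
      exact wt_eq_zero h0
    rw [sub_eq_zero.1 this]
    exact memR' _
  · intro x hx hw
    rw [wt_split] at hw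
    rcases (by omega : (Finset.univ.filter fun k => x (infoPos k) ≠ 0).card ≤ 3 ∨
      (Finset.univ.filter fun k => x (coPos k) ≠ 0).card ≤ 3) with h | h
    · have := wt_vecMul_of_sparse hT.lenR hT.checkR _ h
      rw [← eqR x hx, wt_split] at this
      exact wt_eq_zero (by rw [wt_split]; omega)
    · have := wt_vecMul_of_sparse hT.lenR' hT.checkR' _ h
      rw [← eqR' x hx, wt_split] at this
      exact wt_eq_zero (by rw [wt_split]; omega)

/-! ### The weight distribution -/

theorem IsGoodCode.three_dvd_wt {C : Submodule (ZMod 3) (Fin 24 → ZMod 3)} (hC : IsGoodCode C)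
    {x : Fin 24 → ZMod 3} (hx : x ∈ C) : 3 ∣ wt x := by
  have h := hC.orth x hx x hx
  have hsq : ∀ t : ZMod 3, t * t = if t ≠ 0 then 1 else 0 := by decide
  rw [← ZMod.natCast_eq_zero_iff, ← h, wt, Finset.natCast_card_filter, dotProduct]
  exact Finset.sum_congr rfl fun j _ => (hsq (x j)).symm

/-- Any `t ≤ 6` coordinates are independent on the code, because a linear relation between them
would be a nonzero word of weight at most 6 in the dual code, which is the code itself. -/
theorem IsGoodCode.card_vanishing {C : Submodule (ZMod 3) (Fin 24 → ZMod 3)} (hC : IsGoodCode C)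
    (T : Finset (Fin 24)) (hT : T.card ≤ 6) :
    (Finset.univ.filter fun x : C => ∀ j ∈ T, (x : Fin 24 → ZMod 3) j = 0).card =
      3 ^ (12 - T.card) := by
  let ρ : C →ₗ[ZMod 3] (T → ZMod 3) := (LinearMap.funLeft (ZMod 3) (ZMod 3) Subtype.val).comp
    C.subtype
  have hρ : ∀ (x : C) (j : T), ρ x j = (x : Fin 24 → ZMod 3) j := fun _ _ => rfl
  have hsurj : LinearMap.range ρ = ⊤ := by
    by_contra hne
    obtain ⟨φ, hφ, hle⟩ := Submodule.exists_le_ker_of_lt_top _ (lt_top_iff_ne_top.2 hne)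
    let y : Fin 24 → ZMod 3 := fun j => if h : j ∈ T then φ (Pi.single ⟨j, h⟩ 1) else 0
    have hφy : ∀ v : T → ZMod 3, φ v = ∑ j : T, v j * y j := by
      intro v
      conv_lhs => rw [pi_eq_sum_univ' v, map_sum]
      refine Finset.sum_congr rfl fun j _ => ?_
      simp [y]
    have hy : y ∈ C := by
      refine hC.dual y fun x hx => ?_
      have h0 : φ (ρ ⟨x, hx⟩) = 0 := hle ⟨_, rfl⟩
      rw [hφy] at h0
      rw [← h0, dotProduct]
      simp only [hρ]
      rw [Finset.sum_coe_sort T fun j => x j * y j]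
      refine (Finset.sum_subset (Finset.subset_univ T) fun j _ hj => ?_).symm
      simp [y, hj]
    have hy0 : y = 0 := by
      refine hC.dist y hy (le_trans (Finset.card_le_card fun j hj => ?_) hT)
      by_contra hjT
      simp [y, hjT] at hj
    refine hφ (LinearMap.ext fun v => ?_)
    rw [hφy, hy0]
    simp
  have hrank := LinearMap.finrank_range_add_finrank_ker ρ
  rw [hsurj, finrank_top, hC.finrank, Module.finrank_fintype_fun_eq_card, Fintype.card_coe] at hrank
  have hker : Nat.card (LinearMap.ker ρ) = 3 ^ (12 - T.card) := by
    rw [Module.natCard_eq_pow_finrank (K := ZMod 3), Nat.card_zmod]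
    congr 1
    omega
  rw [← hker, ← Fintype.card_subtype, ← Nat.card_eq_fintype_card]
  refine Nat.card_congr (Equiv.subtypeEquivRight fun x => ?_)
  rw [LinearMap.mem_ker, funext_iff, Subtype.forall]
  rfl

theorem card_zeros (x : Fin 24 → ZMod 3) :
    (Finset.univ.filter fun j => x j = 0).card = 24 - wt x := by
  have := Finset.card_filter_add_card_filter_not (s := (Finset.univ : Finset (Fin 24)))
    (fun j => x j = 0)
  rw [Finset.card_univ, Fintype.card_fin] at this
  simp only [wt, ne_eq]
  omega

/-- Counting pairs of a codeword and a `t`-set of its zeros in two ways. -/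
theorem IsGoodCode.moment {C : Submodule (ZMod 3) (Fin 24 → ZMod 3)} (hC : IsGoodCode C)
    (t : ℕ) (ht : t ≤ 6) :
    ∑ x : C, (24 - wt (x : Fin 24 → ZMod 3)).choose t = Nat.choose 24 t * 3 ^ (12 - t) := by
  have h1 : ∀ x : C, (24 - wt (x : Fin 24 → ZMod 3)).choose t =
      ∑ T ∈ Finset.powersetCard t (Finset.univ : Finset (Fin 24)),
        if ∀ j ∈ T, (x : Fin 24 → ZMod 3) j = 0 then 1 else 0 := fun x => by
    rw [← card_zeros, ← Finset.card_powersetCard, ← Finset.card_filter]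
    congr 1
    ext T
    simp only [Finset.mem_powersetCard, Finset.mem_filter, true_and,
      Finset.subset_iff, Finset.mem_univ, implies_true]
    exact and_comm
  simp only [h1]
  rw [Finset.sum_comm]
  rw [Finset.sum_congr rfl fun T hT => ?_, Finset.sum_const, Finset.card_powersetCard,
    Finset.card_univ, Fintype.card_fin, smul_eq_mul]
  rw [← Finset.card_filter,
    hC.card_vanishing T (by rw [(Finset.mem_powersetCard.1 hT).2]; exact ht),
    (Finset.mem_powersetCard.1 hT).2]

theorem IsGoodCode.wt_cases {C : Submodule (ZMod 3) (Fin 24 → ZMod 3)} (hC : IsGoodCode C)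
    (x : C) : wt (x : Fin 24 → ZMod 3) ∈ ({0, 9, 12, 15, 18, 21, 24} : Finset ℕ) := by
  have h3 := hC.three_dvd_wt x.2
  have h24 : wt (x : Fin 24 → ZMod 3) ≤ 24 := (Finset.card_le_univ _).trans_eq (Fintype.card_fin 24)
  have h6 : wt (x : Fin 24 → ZMod 3) ≤ 6 → wt (x : Fin 24 → ZMod 3) = 0 := fun h => by
    rw [hC.dist x x.2 h]; simp [wt]
  simp only [Finset.mem_insert, Finset.mem_singleton]
  omega

/-- The number of codewords of weight `w`. -/
def weightCount (C : Submodule (ZMod 3) (Fin 24 → ZMod 3)) (w : ℕ) : ℕ :=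
  (Finset.univ.filter fun x : C => wt (x : Fin 24 → ZMod 3) = w).card

theorem sum_eq_weightCount {C : Submodule (ZMod 3) (Fin 24 → ZMod 3)} (hC : IsGoodCode C)
    {M : Type*} [CommRing M] (ψ : ℕ → M) :
    ∑ x : C, ψ (wt (x : Fin 24 → ZMod 3)) = weightCount C 0 * ψ 0 + weightCount C 9 * ψ 9 +
      weightCount C 12 * ψ 12 + weightCount C 15 * ψ 15 + weightCount C 18 * ψ 18 +
      weightCount C 21 * ψ 21 + weightCount C 24 * ψ 24 := by
  rw [← Finset.sum_fiberwise_of_maps_to (fun x _ => hC.wt_cases x)]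
  have h : ∀ w, ∑ x ∈ Finset.univ.filter (fun x : C => wt (x : Fin 24 → ZMod 3) = w),
      ψ (wt (x : Fin 24 → ZMod 3)) =
      weightCount C w * ψ w := fun w => by
    rw [Finset.sum_congr rfl fun x hx => by rw [(Finset.mem_filter.1 hx).2], Finset.sum_const,
      nsmul_eq_mul, weightCount]
  simp only [h]
  simp [add_assoc]

/-- Sums over the code of a function of the weight. The moments of order `0, …, 5` determine the
six unknown weight multiplicities. -/
theorem IsGoodCode.sum_eq {C : Submodule (ZMod 3) (Fin 24 → ZMod 3)} (hC : IsGoodCode C)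
    {M : Type*} [CommRing M] (φ : ℕ → M) :
    ∑ x : C, φ (wt (x : Fin 24 → ZMod 3)) = φ 0 + 4048 * φ 9 + 61824 * φ 12 + 242880 * φ 15 +
      198352 * φ 18 + 24288 * φ 21 + 48 * φ 24 := by
  have hA0 : weightCount C 0 = 1 := by
    refine Finset.card_eq_one.2 ⟨0, ?_⟩
    ext x
    simp only [Finset.mem_filter, Finset.mem_univ, true_and, Finset.mem_singleton]
    constructor
    · intro h
      exact Subtype.ext (wt_eq_zero h)
    · rintro rfl
      simp [wt]
  have hm : ∀ t ≤ 6, ((weightCount C 0 * (24 - 0).choose t + weightCount C 9 * (24 - 9).choose t +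
      weightCount C 12 * (24 - 12).choose t + weightCount C 15 * (24 - 15).choose t + weightCount C 18 * (24 - 18).choose t +
      weightCount C 21 * (24 - 21).choose t + weightCount C 24 * (24 - 24).choose t : ℕ) : ℤ) =
      (Nat.choose 24 t * 3 ^ (12 - t) : ℕ) := by
    intro t ht
    rw [← hC.moment t ht]
    push_cast
    exact (sum_eq_weightCount hC fun w => ((24 - w).choose t : ℤ)).symm
  have m0 := hm 0 (by norm_num)
  have m1 := hm 1 (by norm_num)
  have m2 := hm 2 (by norm_num)
  have m3 := hm 3 (by norm_num)
  have m4 := hm 4 (by norm_num)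
  have m5 := hm 5 (by norm_num)
  norm_num [Nat.choose, hA0] at m0 m1 m2 m3 m4 m5
  have a9 : weightCount C 9 = 4048 := by omega
  have a12 : weightCount C 12 = 61824 := by omega
  have a15 : weightCount C 15 = 242880 := by omega
  have a18 : weightCount C 18 = 198352 := by omega
  have a21 : weightCount C 21 = 24288 := by omega
  have a24 : weightCount C 24 = 48 := by omega
  rw [sum_eq_weightCount hC φ, hA0, a9, a12, a15, a18, a21, a24]
  norm_num

theorem swe_eq_sum (C : Submodule (ZMod 3) (Fin 24 → ZMod 3)) :
    swe 3 1 C = ∑ x : C, (X 0 : MvPolynomial (Fin 2) ℚ) ^ wt (x : Fin 24 → ZMod 3) *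
      X 1 ^ (24 - wt (x : Fin 24 → ZMod 3)) := by
  unfold swe
  rw [← Finset.sum_filter, Finset.sum_subtype (p := fun x => x ∈ C) _ (fun x => by simp)]
  refine Finset.sum_congr rfl fun x _ => ?_
  rw [Fin.prod_univ_one, ← card_zeros]
  have h : ∀ t : ZMod 3, (t ≠ 0 ∧ padicValNat 3 t.val = ((0 : Fin 1) : ℕ)) ↔ t ≠ 0 := fun t => by
    refine and_iff_left_of_imp fun ht => padicValNat.eq_zero_of_not_dvd fun hd => ?_
    exact ht ((ZMod.val_eq_zero t).1 (Nat.eq_zero_of_dvd_of_lt hd (ZMod.val_lt t)))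
  simp only [h]
  rfl

/-- The symmetrized weight enumerator of the extended ternary QR code of length 24. -/
theorem stmt_13 (g : Polynomial (ZMod 3)) (hg : IsQRFactor 3 g)
    (g1 : Polynomial (ZMod 3)) (C1 : Submodule (ZMod 3) (Fin 24 → ZMod 3))
    (hC1 : IsLiftedQR (by norm_num : (3:ℕ) ∣ 3) g g1 C1) :
    swe 3 1 C1 =
      X 1 ^ 24 + 4048 * X 0 ^ 9 * X 1 ^ 15 + 61824 * X 0 ^ 12 * X 1 ^ 12
        + 242880 * X 0 ^ 15 * X 1 ^ 9 + 198352 * X 0 ^ 18 * X 1 ^ 6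
        + 24288 * X 0 ^ 21 * X 1 ^ 3 + 48 * X 0 ^ 24 := by
  obtain ⟨-, -, -, hmap, hmem⟩ := hC1
  have hid : ZMod.castHom (by norm_num : (3 : ℕ) ∣ 3) (ZMod 3) = RingHom.id (ZMod 3) :=
    Subsingleton.elim _ _
  rw [hid, Polynomial.map_id] at hmap
  subst hmap
  have hgood : IsGoodCode C1 := by
    obtain ⟨hm, hd, -, hdvd⟩ := id hg
    rcases eq_digitPoly hg with rfl | rfl
    · exact isGoodCode table_one C1 fun c => (hmem c).trans (mem_iff_vecMul table_one hm hd hdvd c)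
    · exact isGoodCode table_two C1 fun c => (hmem c).trans (mem_iff_vecMul table_two hm hd hdvd c)
  rw [swe_eq_sum, hgood.sum_eq fun w => (X 0 : MvPolynomial (Fin 2) ℚ) ^ w * X 1 ^ (24 - w)]
  norm_num
  ring
end
end

section
/- For the family C_m of lifted extended quadratic residue codes of length 24 modulo 3^m, let A_{1,1} := 3^{−12}·swe_{C_2}(x_0, z−y_0, z+2y_0) ∈ ℚ[x_0,y_0,z]. Then the sum of those monomials of A_{1,1} that are divisible by x_0·y_0 equals D_{1,1} = −16192·z^6·x_0^9·y_0^9 + 12144·z^3·x_0^9·y_0^{12} + 12144·z^3·x_0^{12}·y_0^9 − 1104·x_0^{12}·y_0^{12}. -/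
/-!
Up to reversing the first 23 coordinates, the code `C_2` is an explicit free code `code 9` over
`ℤ/9ℤ`: uniqueness of the Hensel lift leaves two possible generator polynomials, which are
reciprocal to each other (`exists_perm`). Its reduction `code 3` is self-dual, and `code 9` is
self-dual for the form with Gram weights `(1, …, 1, 7)`.

The words of `code 9` above `c ∈ code 3` form a coset of `3 · code 3`. Poisson summation over this
coset turns the transformed enumerator into the sum, over pairs `(c, s)` of words of `code 3` with
disjoint supports, of `ψ(χ(c, s)) x^(wt c) y^(wt s) z^(24 - wt c - wt s)`. Here `ψ` is the
standard additive character of `ℤ/3ℤ`, and the phase `χ(c, s) = ∑ s_j b_j` is formed with the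
second ternary digit `b` of a lift of `c`. Monomials divisible by `x y` come from pairs of nonzero
words. The weights of `code 3` are divisible by 3. The MacWilliams identity, explicit lists of
4048 words of weight 9 and 48 words of weight 24, and the absence of words of weight 3 show that
the minimum weight is 9 and that both lists are complete. So only the weights (9, 9), (9, 12),
(12, 9), (12, 12) remain, the last because a disjoint pair of total weight 24 comes from two words
`c + s`, `c - s` of weight 24, which forces both weights to be 12 (`full_pair`).

* (9, 9): each word of weight 9 has phase sum `-4` against the disjoint words of weight 9. This is
  a finite check on representatives modulo cyclic shifts and signs (`asum_reps`).
* (9, 12): the words disjoint from a fixed word `c` of weight 9 form a group on which the phase is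
  a nontrivial character, so the phases add up to zero. Removing the word 0 and those of weight 9
  leaves `3 = 0 - 1 + 4`.
* (12, 9): self-duality modulo 9 makes `χ` antisymmetric on disjoint pairs, which reduces this case
  to the previous one.
* (12, 12): disjoint pairs correspond to the `48 · 46 = 2208` pairs of words of weight 24 that are
  distinct up to sign. All phases are nonzero, and `s ↦ -s` pairs them up with sum `-1`, which
  gives `-1104`.
-/

open MvPolynomial
open scoped Classical

noncomputable section

/-- The sum of those monomials of `A` that are divisible by `X i * X j`. -/
def divPart {σ : Type*} (A : MvPolynomial σ ℚ) (i j : σ) : MvPolynomial σ ℚ :=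
  ∑ d ∈ A.support.filter (fun d => d i ≠ 0 ∧ d j ≠ 0), monomial d (A.coeff d)

namespace QR24

/-! ### Packed words -/

/-- The `j`-th binary digit of `m`. -/
def bt (m j : ℕ) : Bool := Nat.beq (Nat.land (Nat.shiftRight m j) 1) 1

/-- Ternary vectors of length 24 are packed as pairs `(S, P)` of bit masks: `S` marks the nonzero
coordinates and `P` the coordinates equal to `1`. This is the `j`-th coordinate, in `{0, 1, 2}`. -/
def dg (x : ℕ × ℕ) (j : ℕ) : ℕ := bif bt x.1 j then (bif bt x.2 j then 1 else 2) else 0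

/-- A word over `ℤ/9ℤ`, packed as two ternary vectors: its residue modulo 3 and its second
ternary digit. -/
abbrev Packed := (ℕ × ℕ) × (ℕ × ℕ)

/-- The `j`-th coordinate of a packed word over `ℤ/9ℤ`, in `{0, …, 8}`. -/
def ent (q : Packed) (j : ℕ) : ℕ := Nat.add (dg q.1 j) (Nat.mul 3 (dg q.2 j))

/-- Cyclic shift of the lowest 23 bits, fixing bit 23. -/
def rot (m : ℕ) : ℕ := m * 2 % 2 ^ 23 + m / 2 ^ 22 % 2 + m / 2 ^ 23 * 2 ^ 23

/-- Cyclic shift of a packed word. -/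
def rotq (q : Packed) : Packed := ((rot q.1.1, rot q.1.2), (rot q.2.1, rot q.2.2))

/-- The first `n` cyclic shifts of a packed word. -/
def rots : ℕ → Packed → List Packed
  | 0, _ => []
  | n + 1, q => q :: rots n (rotq q)

/-- Words of the code modulo 9 whose residues represent the weight 9 words of the code modulo 3 up
to sign and cyclic shifts. -/
def reps : List Packed :=
  [((13301760, 9058304), (16404480, 2772992)), ((7316480, 4563968), (16584704, 6623232)), ((5830144,
  4224512), (4710400, 409600)), ((14306816, 525824), (8386560, 1310720)), ((14373120, 5964032),
  (14610432, 790528)), ((13744384, 9539840), (6744064, 450560)), ((7654656, 3197184), (3535872,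
  16384)), ((15631104, 6849280), (3928064, 3272704)), ((12822272, 206592), (13496320, 4251648)),
  ((5447424, 67840), (15406592, 2162688)), ((7295104, 2560128), (6123520, 4993024)), ((13077632,
  4195456), (11991040, 2125824)), ((6485120, 4198528), (11256832, 10551296)), ((15346816, 139392),
  (9690112, 9650176)), ((8032896, 33408), (15515648, 10764288)), ((15755904, 12593792), (8278016,
  786432)), ((5584512, 4194944), (14021632, 5324800)), ((6144640, 1065088), (10842624, 344064)),
  ((16519552, 15466624), (5484800, 163840)), ((4664192, 196736), (8108800, 6914048)), ((7965760,
  7343168), (13856768, 8605696)), ((6171712, 1845312), (5993472, 1597440)), ((13525568, 4596288),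
  (6787072, 331776)), ((13408832, 9208384), (16766976, 12025856)), ((14738240, 10527040), (15905280,
  8531968)), ((15079744, 4325440), (6453504, 151552)), ((6513984, 6489152), (12448000, 1675264)),
  ((5096768, 294976), (11498752, 8978432)), ((13719744, 13648064), (1292288, 1183744)), ((16000192,
  5506240), (16609280, 13438976)), ((5904832, 659904), (5023744, 827392)), ((4321728, 94400),
  (3494144, 3149824)), ((5834688, 5832896), (1962, 1664)), ((14758592, 8768), (3928192, 3227648)),
  ((6573760, 2362944), (4212687, 1858)), ((7375808, 5276480), (2101231, 3182)), ((4994496, 525376),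
  (16363904, 4235264)), ((16156704, 14813216), (14643200, 5251072)), ((14232608, 8465440),
  (15523840, 9216000)), ((5465632, 5317152), (16643072, 4538368)), ((4960800, 69664), (12153344,
  3223552)), ((6600224, 6336544), (7628288, 270336)), ((13210912, 4232480), (16678912, 12189696)),
  ((13813024, 9602080), (12230912, 2129920)), ((4771616, 4768288), (3098, 1032)), ((5274400, 12320),
  (5618432, 4296704)), ((7701664, 2393248), (15671296, 6291456)), ((4609696, 1184), (10469888,
  9093120)), ((6408608, 4213152), (13627392, 90112)), ((6899360, 6374432), (11727488, 9613312)),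
  ((13394336, 4997408), (14987392, 12288)), ((13052000, 12910688), (4192256, 421888)), ((6446176,
  6309984), (7959552, 5324800)), ((5673312, 262240), (1638656, 1048576)), ((7422816, 3162720),
  (14901504, 14827520)), ((4369632, 134368), (4239295, 1330)), ((13669088, 1085664), (12153344,
  10055680)), ((5065312, 66080), (15968320, 5382144)), ((6371680, 67616), (3903808, 1773568)),
  ((12866912, 20512), (13030720, 8699904)), ((6064352, 6029472), (16767040, 12255232)), ((13054480,
  8786448), (15294464, 6905856)), ((6508048, 2310672), (11992064, 10629120)), ((16321040, 6883344),
  (16163328, 1449984)), ((7427344, 6309136), (7954432, 6815744)), ((13905168, 12847376), (14705664,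
  12607488)), ((4626192, 4461840), (9654784, 1069056)), ((15340816, 2757648), (8364288, 4071424)),
  ((5859472, 1646736), (16128000, 1052672)), ((5480848, 400), (13824000, 12587008)), ((4901264,
  182416), (15659264, 11288576)), ((14029968, 13763600), (3711104, 3702784)), ((5548688, 4202512),
  (14629504, 13828096)), ((7484496, 131152), (10900480, 2494464)), ((6836944, 2638032), (6722048,
  299008)), ((12895440, 4456464), (14419136, 0)), ((6435632, 2106160), (14020608, 352256)),
  ((6625456, 6357168), (16611328, 8155136)), ((4762224, 567344), (4195969, 1536)), ((5055792,
  795920), (6447136, 8192)), ((4510128, 16656), (14336160, 8519680)), ((4789488, 4194384), (594238,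
  316)), ((6591880, 4228488), (10612736, 114688)), ((14193800, 8950792), (12185728, 536576)),
  ((13165192, 12582920), (16167552, 4206592)), ((4864648, 532488), (7142016, 6299648)), ((4928584,
  144456), (9162752, 86016)), ((7623240, 4473416), (12578816, 9273344))]

/-- Representatives of the weight 9 words up to sign. -/
def L9 : List Packed := reps.flatMap (rots 23)

/-- The lift `(1, …, 1, 4)` of the all-one word. -/
def oneQ : Packed := ((16777215, 16777215), (8388608, 8388608))

/-- The lift of the Paley word, with coordinates the Legendre symbols modulo 23. -/
def paleyQ : Packed := ((16777215, 8729438), (16436384, 0))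

/-- Representatives of the weight 24 words up to sign. -/
def L24 : List Packed := oneQ :: rots 23 paleyQ

/- Several functions below are written with recursors, since these are the cheapest to evaluate
in the kernel. -/

/-- `∑_{j < n} f j`. -/
def sumTo (f : ℕ → ℕ) (n : ℕ) : ℕ := Nat.rec 0 (fun j s => Nat.add (f j) s) n

/-- Number of entries of `L` satisfying `p`. -/
def cnt {α : Type} (p : α → Bool) (L : List α) : ℕ :=
  List.rec 0 (fun t _ s => bif p t then Nat.succ s else s) L

/-- The sublist of `L` of entries satisfying `p`. -/
def filt {α : Type} (p : α → Bool) (L : List α) : List α :=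
  List.rec [] (fun a _ s => Bool.rec s (a :: s) (p a)) L

/-- Radix test for the entries of `L` being pairwise distinguished by the predicates `p j`,
`j ∈ js`. -/
def sepBy {α : Type} (p : ℕ → α → Bool) (js : List ℕ) : List α → Bool :=
  List.rec (fun L => Nat.ble L.length 1)
    (fun j _ ih L => List.rec true (fun _ L' _ => List.rec true
      (fun _ _ _ => Bool.rec false (ih (filt (p j) L)) (ih (filt (fun a => !p j a) L))) L') L) js

/-- The phase `∑ t_j b_j` of a ternary word against a second ternary digit `b`. -/
def dotN (x y : ℕ × ℕ) : ℕ := Nat.mod (sumTo (fun j => Nat.mul (dg x j) (dg y j)) 24) 3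

/-- Number of `t` in `L9` disjoint from `r` with phase zero (`v = true`) or nonzero. -/
def phases (r : Packed) (v : Bool) : ℕ :=
  cnt (fun t : Packed => bif Nat.beq (Nat.land t.1.1 r.1.1) 0 then
    Bool.rec (!v) v (Nat.beq (dotN t.1 r.2) 0) else false) L9

/-- The coefficients of the generator polynomial modulo 9. -/
def gco (k : ℕ) : ℕ := [8, 5, 8, 4, 7, 0, 5, 0, 5, 3, 6, 1].getD k 0

/-- The generator matrix, with natural number entries. -/
def genN (i j : ℕ) : ℕ := bif Nat.beq j 23 then 2 else bif Nat.ble i j then gco (j - i) else 0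

/-- The Gram weights `(1, …, 1, 7)`, for which the code modulo 9 is self-dual. -/
def gramN (j : ℕ) : ℕ := bif Nat.beq j 23 then 7 else 1

/-- Parity check for a packed word. -/
def parityOK (q : Packed) : Bool :=
  (List.range 12).all fun i =>
    Nat.beq (Nat.mod (sumTo (fun j => genN i j * gramN j * ent q j) 24) 9) 0

/-- The weight modulo 3 of a packed word. -/
def wtN (q : Packed) : ℕ := sumTo (fun j => bif Nat.beq (dg q.1 j) 0 then 0 else 1) 24

/-- Signed coordinates of a packed word over `ℤ/9ℤ`; `9 - e` stands for `-e`. -/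
def sent (s : Bool) (q : Packed) (j : ℕ) : ℕ := bif s then Nat.sub 9 (ent q j) else ent q j

/-- For signed weight 24 words `r₁`, `r₂` modulo 9, the test that `r₁ + r₂` has weight 12 modulo 3
and that its second ternary digit has nonzero phase against the restriction of `r₁` to the zeros of
`r₁ + r₂` modulo 3. -/
def pairOK (s₁ s₂ : Bool) (q₁ q₂ : Packed) : Bool :=
  Nat.beq (sumTo (fun j => bif Nat.beq (Nat.mod (Nat.add (sent s₁ q₁ j) (sent s₂ q₂ j)) 3) 0
    then 0 else 1) 24) 12 &&
  !Nat.beq (Nat.mod (sumTo (fun j =>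
    bif Nat.beq (Nat.mod (Nat.add (sent s₁ q₁ j) (sent s₂ q₂ j)) 3) 0
    then Nat.mul (sent s₁ q₁ j) (Nat.div (Nat.mod (Nat.add (sent s₁ q₁ j) (sent s₂ q₂ j)) 9) 3)
    else 0) 24) 3) 0

/-- Coefficients of the inverse of the generator polynomial as a power series modulo 9. -/
def hco (k : ℕ) : ℕ := [8, 4, 3, 7, 5, 4, 5, 2, 3, 5, 3, 6].getD k 0

/-- A matrix `A` such that `A w` is the message encoded as `w`. -/
def aN (k j : ℕ) : ℕ := bif Nat.blt j 12 then bif Nat.ble j k then hco (k - j) else 0 else 0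

/-- A matrix `B` for which `1 = Mᵀ A + B H`, where `M` is the generator matrix and `H` the parity
check matrix. -/
def bN (i k : ℕ) : ℕ :=
  bif Nat.blt i 12 then 0 else
    bif Nat.beq i 23 then (bif Nat.beq k 0 then 2 else 0) else
      bif Nat.beq k 0 then gco (i - 12) else
        bif Nat.ble k (i - 11) then [1, 3, 6, 4, 6, 7, 4, 5, 4, 2, 6].getD (i - 11 - k) 0 else 0

/-- The coordinate permutation behind `rot`: bit `j` of `rot m` is bit `shN j` of `m`. -/
def shN (j : ℕ) : ℕ := bif Nat.beq j 23 then 23 else bif Nat.beq j 0 then 22 else j - 1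

/-! ### Finite verifications -/

section Verification

set_option maxRecDepth 100000

/-- Up to sign, each representative is disjoint from 7 words of weight 9 with zero phase and from
18 with nonzero phase. -/
theorem k_phases : (reps.all fun r =>
    Nat.beq (phases r true) 7 && Nat.beq (phases r false) 18) = true := by
  decide +kernel

/-- The supports of the listed weight 9 words are pairwise distinct. -/
theorem k_sep9 : sepBy (fun j (q : Packed) => bt q.1.1 j) (List.range 24) L9 = true := by
  decide +kernel

theorem k_sep24 : sepBy (fun j (q : Packed) => bt q.1.2 j) (List.range 24) L24 = true := by
  decide +kernel

theorem k_len9 : L9.length = 2024 := by decide +kernel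

theorem k_parity9 : reps.all parityOK = true := by decide +kernel

theorem k_parity24 : (parityOK oneQ && parityOK paleyQ) = true := by decide +kernel

theorem k_wt9 : (reps.all fun q => Nat.beq (wtN q) 9) = true := by decide +kernel

theorem k_pair : (L24.all fun q₁ => L24.all fun q₂ => Nat.beq q₁.1.2 q₂.1.2 ||
    (pairOK false false q₁ q₂ && pairOK false true q₁ q₂ && pairOK true false q₁ q₂ &&
      pairOK true true q₁ q₂)) = true := by
  decide +kernel

/-- Any two coordinates are separated by the signs of some listed word of weight 24. -/
theorem k_col : ((List.range 24).all fun i => (List.range i).all fun j =>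
    L24.any fun q => Bool.xor (bt q.1.2 i) (bt q.1.2 j)) = true := by
  decide +kernel

/-- The splitting `1 = Mᵀ A + B H` behind the exactness of generator and parity check matrices. -/
theorem k_split : ((List.range 24).all fun i => (List.range 24).all fun j =>
    Nat.beq (Nat.mod (sumTo (fun k => genN k i * aN k j) 12 +
      sumTo (fun k => bN i k * (genN k j * gramN j)) 12) 9)
        (bif Nat.beq i j then 1 else 0)) = true := by
  decide +kernel

theorem k_gram : ((List.range 12).all fun i => (List.range 12).all fun k =>
    Nat.beq (Nat.mod (sumTo (fun j => genN i j * gramN j * genN k j) 24) 9) 0) = true := by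
  decide +kernel

theorem k_right : ((List.range 12).all fun i => (List.range 12).all fun k =>
    Nat.beq (Nat.mod (sumTo (fun j => aN i j * genN k j) 24) 9)
      (bif Nat.beq i k then 1 else 0)) = true := by
  decide +kernel

/-- The code is invariant under cyclic shifts of the first 23 coordinates. -/
theorem k_shift : ((List.range 12).all fun i => (List.range 12).all fun k =>
    Nat.beq (Nat.mod (sumTo (fun j => genN i j * gramN j * genN k (shN j)) 24) 9) 0) = true := by
  decide +kernel

end Verification

/-! ### The codes modulo 3 and 9 -/

lemma sumTo_eq (f : ℕ → ℕ) (n : ℕ) : sumTo f n = ∑ k : Fin n, f k := by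
  rw [Fin.sum_univ_eq_sum_range]
  induction n with
  | zero => rfl
  | succ n ih =>
    rw [Finset.sum_range_succ, ← ih]
    exact Nat.add_comm (f n) (sumTo f n)

lemma cast_of_beq {n a b : ℕ} (h : n ∣ 9) (hab : Nat.beq (Nat.mod a 9) b = true) :
    (a : ZMod n) = b := by
  have h1 : a % 9 = b := Nat.eq_of_beq_eq_true hab
  rw [← h1]
  exact (ZMod.natCast_eq_natCast_iff a (a % 9) n).2 (Nat.ModEq.of_dvd h (Nat.mod_modEq a 9).symm)

lemma cast_beq (n a b : ℕ) :
    ((bif Nat.beq a b then 1 else 0 : ℕ) : ZMod n) = if a = b then 1 else 0 := by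
  by_cases h : a = b
  · simp [h]
  · have : Nat.beq a b = false := by
      rw [Bool.eq_false_iff]; simpa using h
    simp [this, h]

/-- The code of length 24 over `ℤ/nℤ` (for `n = 3, 9`), given by its parity checks. -/
def code (n : ℕ) : Submodule (ZMod n) (Fin 24 → ZMod n) where
  carrier := {w | ∀ i : Fin 12, ∑ j : Fin 24, ((genN i j * gramN j : ℕ) : ZMod n) * w j = 0}
  add_mem' := by
    intro a b ha hb i
    simp only [Pi.add_apply, mul_add, Finset.sum_add_distrib, ha i, hb i, add_zero]
  zero_mem' := by intro i; simp
  smul_mem' := by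
    intro r a ha i
    simp only [Pi.smul_apply, smul_eq_mul, mul_left_comm _ r, ← Finset.mul_sum, ha i, mul_zero]

lemma mem_code {n : ℕ} {w : Fin 24 → ZMod n} :
    w ∈ code n ↔ ∀ i : Fin 12, ∑ j : Fin 24, ((genN i j * gramN j : ℕ) : ZMod n) * w j = 0 :=
  Iff.rfl

/-- The codeword with message `l`. -/
def enc {n : ℕ} (l : Fin 12 → ZMod n) : Fin 24 → ZMod n :=
  fun j => ∑ k : Fin 12, l k * (genN k j : ZMod n)

lemma enc_mem {n : ℕ} (h : n ∣ 9) (l : Fin 12 → ZMod n) : enc l ∈ code n := by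
  intro i
  have key : ∀ k : Fin 12, ∑ j : Fin 24, ((genN i j * gramN j * genN k j : ℕ) : ZMod n) = 0 := by
    intro k
    have := k_gram
    simp only [List.all_eq_true, List.mem_range] at this
    have h1 := this i i.2 k k.2
    have h2 := cast_of_beq h h1
    rw [sumTo_eq] at h2
    rw [← Nat.cast_sum, h2, Nat.cast_zero]
  simp only [enc, Finset.mul_sum]
  rw [Finset.sum_comm]
  refine Finset.sum_eq_zero fun k _ => ?_
  have : ∀ j : Fin 24, ((genN i j * gramN j : ℕ) : ZMod n) * (l k * (genN k j : ZMod n)) =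
      l k * ((genN i j * gramN j * genN k j : ℕ) : ZMod n) := by
    intro j; push_cast; ring
  simp only [this, ← Finset.mul_sum, key, mul_zero]

lemma exists_enc {n : ℕ} (h : n ∣ 9) {w : Fin 24 → ZMod n} (hw : w ∈ code n) :
    w = enc fun k => ∑ j : Fin 24, (aN k j : ZMod n) * w j := by
  have key : ∀ i j : Fin 24, ∑ k : Fin 12, ((genN k i * aN k j : ℕ) : ZMod n) +
      ∑ k : Fin 12, ((bN i k * (genN k j * gramN j) : ℕ) : ZMod n) = if i = j then 1 else 0 := by
    intro i j
    have := k_split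
    simp only [List.all_eq_true, List.mem_range] at this
    have h1 := this i i.2 j j.2
    have h2 := cast_of_beq h h1
    rw [sumTo_eq, sumTo_eq, cast_beq] at h2
    rw [← Nat.cast_sum, ← Nat.cast_sum, ← Nat.cast_add, h2]
    simp only [Fin.ext_iff]
  funext i
  have e1 : w i = ∑ j : Fin 24, (if i = j then 1 else 0) * w j := by simp
  rw [e1]
  simp only [← key, add_mul, Finset.sum_add_distrib, Finset.sum_mul]
  have e2 : ∑ j : Fin 24, ∑ k : Fin 12, ((bN i k * (genN k j * gramN j) : ℕ) : ZMod n) * w j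
      = 0 := by
    rw [Finset.sum_comm]
    refine Finset.sum_eq_zero fun k _ => ?_
    have := hw k
    simp only [Nat.cast_mul (bN _ _), mul_assoc, ← Finset.mul_sum]
    rw [this, mul_zero]
  rw [e2, add_zero, Finset.sum_comm]
  simp only [enc, Finset.sum_mul]
  refine Finset.sum_congr rfl fun k _ => Finset.sum_congr rfl fun j _ => ?_
  push_cast; ring

lemma mem_code_iff {n : ℕ} (h : n ∣ 9) {w : Fin 24 → ZMod n} :
    w ∈ code n ↔ ∃ l : Fin 12 → ZMod n, w = enc l :=
  ⟨fun hw => ⟨_, exists_enc h hw⟩, by rintro ⟨l, rfl⟩; exact enc_mem h l⟩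

lemma enc_injective {n : ℕ} (h : n ∣ 9) : Function.Injective (enc (n := n)) := by
  have key : ∀ i k : Fin 12, ∑ j : Fin 24, ((aN i j * genN k j : ℕ) : ZMod n) =
      if i = k then 1 else 0 := by
    intro i k
    have := k_right
    simp only [List.all_eq_true, List.mem_range] at this
    have h1 := this i i.2 k k.2
    have h2 := cast_of_beq h h1
    rw [sumTo_eq, cast_beq] at h2
    rw [← Nat.cast_sum, h2]
    simp only [Fin.ext_iff]
  have inv : ∀ l : Fin 12 → ZMod n, (fun i : Fin 12 => ∑ j : Fin 24, (aN i j : ZMod n) * enc l j)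
      = l := by
    intro l
    funext i
    simp only [enc, Finset.mul_sum]
    rw [Finset.sum_comm]
    have : ∀ k : Fin 12, ∑ j : Fin 24, (aN i j : ZMod n) * (l k * (genN k j : ZMod n)) =
        (if i = k then 1 else 0) * l k := by
      intro k
      rw [← key, Finset.sum_mul]
      refine Finset.sum_congr rfl fun j _ => ?_
      push_cast; ring
    simp [this]
  intro l l' hl
  rw [← inv l, ← inv l', hl]

lemma enc_single {n : ℕ} (i : Fin 12) :
    enc (Pi.single i (1 : ZMod n)) = fun j => (genN i (Fin.val j) : ZMod n) := by
  funext j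
  simp [enc, Pi.single_apply]

/-! ### Cyclic shifts -/

/-- The cyclic shift of the first 23 coordinates. -/
def sh (j : Fin 24) : Fin 24 := ⟨shN j, by revert j; decide⟩

lemma sh_bijective : Function.Bijective sh := by
  rw [← Finite.injective_iff_bijective]; decide

lemma shift_mem {n : ℕ} (h : n ∣ 9) {w : Fin 24 → ZMod n} (hw : w ∈ code n) :
    (fun j => w (sh j)) ∈ code n := by
  obtain ⟨l, rfl⟩ := (mem_code_iff h).1 hw
  intro i
  have key : ∀ k : Fin 12,
      ∑ j : Fin 24, ((genN i j * gramN j * genN k (sh j) : ℕ) : ZMod n) = 0 := by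
    intro k
    have := k_shift
    simp only [List.all_eq_true, List.mem_range] at this
    have h1 := this i i.2 k k.2
    have h2 := cast_of_beq h h1
    rw [sumTo_eq] at h2
    rw [← Nat.cast_sum]
    exact h2.trans Nat.cast_zero
  simp only [enc, Finset.mul_sum]
  rw [Finset.sum_comm]
  refine Finset.sum_eq_zero fun k _ => ?_
  have : ∀ j : Fin 24, ((genN i j * gramN j : ℕ) : ZMod n) * (l k * (genN k (sh j) : ZMod n)) =
      l k * ((genN i j * gramN j * genN k (sh j) : ℕ) : ZMod n) := by
    intro j; push_cast; ring
  simp only [this, ← Finset.mul_sum, key, mul_zero]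

/-! ### Reduction and lifting -/

/-- Reduction modulo 3. -/
def red (v : ZMod 9) : ZMod 3 := ZMod.castHom (by norm_num : 3 ∣ 9) (ZMod 3) v

/-- The second ternary digit of a residue modulo 9. -/
def dig (v : ZMod 9) : ZMod 3 := ((v.val / 3 : ℕ) : ZMod 3)

/-- The embedding `ℤ/3ℤ → ℤ/9ℤ`, `b ↦ 3 b`. -/
def tri (b : ZMod 3) : ZMod 9 := ((3 * b.val : ℕ) : ZMod 9)

lemma red_natCast (a : ℕ) : red (a : ZMod 9) = a := map_natCast _ _

lemma red_add (a b : ZMod 9) : red (a + b) = red a + red b := map_add _ _ _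
lemma red_mul (a b : ZMod 9) : red (a * b) = red a * red b := map_mul _ _ _
lemma red_neg (a : ZMod 9) : red (-a) = -red a := map_neg _ _
lemma red_sum {ι : Type*} (s : Finset ι) (f : ι → ZMod 9) :
    red (∑ i ∈ s, f i) = ∑ i ∈ s, red (f i) :=
  map_sum _ _ _

lemma tri_add : ∀ a b, tri (a + b) = tri a + tri b := by decide
lemma mul_tri : ∀ a b, a * tri b = tri (red a * b) := by decide
lemma tri_eq_zero : ∀ a, tri a = 0 ↔ a = 0 := by decide
lemma red_tri : ∀ a, red (tri a) = 0 := by decide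
lemma dig_add_tri : ∀ v b, dig (v + tri b) = dig v + b := by decide
lemma eq_tri_dig : ∀ v, red v = 0 → v = tri (dig v) := by decide
lemma dig_add_of_red_eq_zero : ∀ v w, red v = 0 → dig (v + w) = dig v + dig w := by decide

lemma tri_sum {ι : Type*} (s : Finset ι) (f : ι → ZMod 3) :
    tri (∑ i ∈ s, f i) = ∑ i ∈ s, tri (f i) := by
  induction s using Finset.induction_on with
  | empty => simp; rfl
  | insert a s ha ih => rw [Finset.sum_insert ha, Finset.sum_insert ha, tri_add, ih]

lemma red_mem {w : Fin 24 → ZMod 9} (hw : w ∈ code 9) : (fun j => red (w j)) ∈ code 3 := by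
  intro i
  have := congrArg red (hw i)
  rw [red_sum] at this
  simp only [red_mul, red_natCast] at this
  rw [this]; rfl

lemma tri_mem_iff {d : Fin 24 → ZMod 3} : (fun j => tri (d j)) ∈ code 9 ↔ d ∈ code 3 := by
  refine forall_congr' fun i => ?_
  simp only [mul_tri, red_natCast]
  rw [← tri_sum, tri_eq_zero]

/-- Every codeword modulo 3 lifts to a codeword modulo 9. -/
lemma exists_lift {c : Fin 24 → ZMod 3} (hc : c ∈ code 3) :
    ∃ w ∈ code 9, (fun j => red (w j)) = c := by
  obtain ⟨l, rfl⟩ := (mem_code_iff (by norm_num)).1 hc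
  refine ⟨enc fun k => ((l k).val : ZMod 9), enc_mem (by norm_num) _, ?_⟩
  funext j
  simp only [enc]
  rw [red_sum]
  refine Finset.sum_congr rfl fun k _ => ?_
  rw [red_mul, red_natCast, red_natCast, ZMod.natCast_zmod_val]

/-- Two lifts of the same word differ by three times a codeword. -/
lemma lift_unique {w w' : Fin 24 → ZMod 9} (hw : w ∈ code 9) (hw' : w' ∈ code 9)
    (h : ∀ j, red (w j) = red (w' j)) :
    ∃ d ∈ code 3, ∀ j, w' j = w j + tri (d j) := by
  have h0 : ∀ j, red (w' j - w j) = 0 := by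
    intro j; rw [sub_eq_add_neg, red_add, red_neg, h, add_neg_cancel]
  refine ⟨fun j => dig (w' j - w j), ?_, fun j => ?_⟩
  · rw [← tri_mem_iff]
    simp only [← eq_tri_dig _ (h0 _)]
    exact (code 9).sub_mem hw' hw
  · rw [← eq_tri_dig _ (h0 _)]; ring

lemma card_code : Fintype.card (code 3) = 3 ^ 12 := by
  have : Fintype.card (Fin 12 → ZMod 3) = 3 ^ 12 := by simp [ZMod.card]
  rw [← this]
  refine (Fintype.card_of_bijective (f := fun l : Fin 12 → ZMod 3 =>
    (⟨enc l, enc_mem (by norm_num) l⟩ : code 3)) ⟨?_, ?_⟩).symm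
  · intro l l' hl
    exact enc_injective (by norm_num : 3 ∣ 9) (congrArg Subtype.val hl)
  · rintro ⟨w, hw⟩
    obtain ⟨l, rfl⟩ := (mem_code_iff (by norm_num)).1 hw
    exact ⟨l, rfl⟩

lemma gram3 (i j : ℕ) : ((genN i j * gramN j : ℕ) : ZMod 3) = (genN i j : ZMod 3) := by
  have : ((gramN j : ℕ) : ZMod 3) = 1 := by
    unfold gramN
    cases Nat.beq j 23 <;> rfl
  push_cast
  rw [this, mul_one]

/-- The code modulo 3 is self-orthogonal. -/
lemma orth {s t : Fin 24 → ZMod 3} (hs : s ∈ code 3) (ht : t ∈ code 3) :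
    ∑ j, s j * t j = 0 := by
  obtain ⟨l, rfl⟩ := (mem_code_iff (by norm_num)).1 hs
  simp only [enc, Finset.sum_mul]
  rw [Finset.sum_comm]
  refine Finset.sum_eq_zero fun i _ => ?_
  have := ht i
  simp only [gram3] at this
  simp only [mul_assoc, ← Finset.mul_sum]
  rw [this, mul_zero]

/-- The code modulo 3 contains its dual. -/
lemma mem_of_orth {t : Fin 24 → ZMod 3} (ht : ∀ s ∈ code 3, ∑ j, t j * s j = 0) : t ∈ code 3 := by
  intro i
  have := ht _ (enc_mem (by norm_num : 3 ∣ 9) (Pi.single i 1))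
  rw [enc_single] at this
  simp only [gram3, mul_comm _ (t _)]
  exact this

/-- The code modulo 9 is self-orthogonal for the Gram weights `(1, …, 1, 7)`. -/
lemma orth9 {s t : Fin 24 → ZMod 9} (hs : s ∈ code 9) (ht : t ∈ code 9) :
    ∑ j, (gramN (Fin.val j) : ZMod 9) * (s j * t j) = 0 := by
  obtain ⟨l, rfl⟩ := (mem_code_iff (by norm_num)).1 hs
  have : ∀ j : Fin 24, (gramN (Fin.val j) : ZMod 9) * (enc l j * t j) =
      ∑ k : Fin 12, l k * (((genN k j * gramN j : ℕ) : ZMod 9) * t j) := by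
    intro j
    simp only [enc, Finset.sum_mul, Finset.mul_sum]
    refine Finset.sum_congr rfl fun k _ => ?_
    push_cast; ring
  simp only [this]
  rw [Finset.sum_comm]
  refine Finset.sum_eq_zero fun i _ => ?_
  rw [← Finset.mul_sum, ht i, mul_zero]

/-! ### Characters and Poisson summation -/

/-- The standard character of `ℤ/3ℤ`. -/
def psi : AddChar (ZMod 3) ℂ := ZMod.stdAddChar

lemma psi_zero : psi 0 = 1 := AddChar.map_zero_eq_one _
lemma psi_add (a b : ZMod 3) : psi (a + b) = psi a * psi b := AddChar.map_add_eq_mul _ _ _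
lemma psi_sum {ι : Type*} (s : Finset ι) (f : ι → ZMod 3) :
    psi (∑ i ∈ s, f i) = ∏ i ∈ s, psi (f i) := by
  induction s using Finset.induction_on with
  | empty => simp
  | insert a s ha ih => rw [Finset.sum_insert ha, Finset.prod_insert ha, psi_add, ih]

lemma psi_eq_one_iff (a : ZMod 3) : psi a = 1 ↔ a = 0 := by
  rw [← psi_zero]
  exact ZMod.injective_stdAddChar.eq_iff

lemma sum_psi_hom {G : Type*} [AddCommGroup G] [Fintype G] (f : G →+ ZMod 3) :
    ∑ g, psi (f g) = if f = 0 then (Fintype.card G : ℂ) else 0 := by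
  split_ifs with h
  · simp [h]
  · have : psi.compAddMonoidHom f ≠ 1 := by
      intro h1
      apply h
      ext g
      have := DFunLike.congr_fun h1 g
      simpa [psi_eq_one_iff] using this
    exact AddChar.sum_eq_zero_of_ne_one this

lemma psi_one_add : psi 1 + psi 2 = -1 := by
  have h := sum_psi_hom (AddMonoidHom.id (ZMod 3))
  have h0 : AddMonoidHom.id (ZMod 3) ≠ 0 := by
    intro h
    have := DFunLike.congr_fun h 1
    exact one_ne_zero this
  rw [if_neg h0] at h
  have h3 : ∑ g : ZMod 3, psi (AddMonoidHom.id (ZMod 3) g) = psi 0 + psi 1 + psi 2 :=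
    Fin.sum_univ_three _
  rw [h3, psi_zero] at h
  linear_combination h

lemma psi_add_neg {a : ZMod 3} (ha : a ≠ 0) : psi a + psi (-a) = -1 := by
  have : a = 1 ∨ a = 2 := by revert a; decide
  rcases this with rfl | rfl
  · exact psi_one_add
  · rw [add_comm]; exact psi_one_add

/-- The codewords modulo 3. -/
def cw : Finset (Fin 24 → ZMod 3) := Finset.univ.filter (· ∈ code 3)

lemma mem_cw {c : Fin 24 → ZMod 3} : c ∈ cw ↔ c ∈ code 3 := by simp [cw]

lemma card_cw : cw.card = 3 ^ 12 := by
  rw [← card_code]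
  exact (Fintype.card_of_subtype cw fun x => mem_cw).symm

lemma sum_cw {R : Type*} [AddCommMonoid R] (F : (Fin 24 → ZMod 3) → R) :
    ∑ d ∈ cw, F d = ∑ d : code 3, F d :=
  Finset.sum_subtype cw (fun _ => mem_cw) F

/-- The functional `d ↦ ∑ t_j d_j` on codewords. -/
def pairing (t : Fin 24 → ZMod 3) : code 3 →+ ZMod 3 where
  toFun d := ∑ j, t j * d.1 j
  map_zero' := by simp
  map_add' := by intro a b; simp [mul_add, Finset.sum_add_distrib]

lemma pairing_apply (t : Fin 24 → ZMod 3) (d : code 3) : pairing t d = ∑ j, t j * d.1 j := rfl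

lemma pairing_eq_zero (t : Fin 24 → ZMod 3) : pairing t = 0 ↔ t ∈ code 3 := by
  constructor
  · intro h0
    refine mem_of_orth fun s hs => ?_
    have h1 : pairing t ⟨s, hs⟩ = 0 := by rw [h0, AddMonoidHom.zero_apply]
    rwa [pairing_apply] at h1
  · intro ht
    refine AddMonoidHom.ext fun d => ?_
    rw [pairing_apply, AddMonoidHom.zero_apply]
    exact orth ht d.2

lemma sum_psi_cw (t : Fin 24 → ZMod 3) :
    ∑ d ∈ cw, psi (∑ j, t j * d j) = if t ∈ code 3 then 3 ^ 12 else 0 := by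
  rw [sum_cw]
  have h := sum_psi_hom (pairing t)
  simp only [pairing_apply, pairing_eq_zero, card_code, Nat.cast_pow, Nat.cast_ofNat] at h
  exact h

/-- Poisson summation over the self-dual code modulo 3. -/
lemma poisson {R : Type*} [CommRing R] [Algebra ℂ R] (b : Fin 24 → ZMod 3)
    (G : Fin 24 → ZMod 3 → R) :
    ∑ d ∈ cw, ∏ j, ∑ s, psi (s * (b j + d j)) • G j s =
      (3 ^ 12 : ℂ) • ∑ s ∈ cw, psi (∑ j, s j * b j) • ∏ j, G j (s j) := by
  have h1 : ∀ d : Fin 24 → ZMod 3, ∏ j, ∑ s, psi (s * (b j + d j)) • G j s =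
      ∑ s : Fin 24 → ZMod 3, psi (∑ j, s j * d j) •
        (psi (∑ j, s j * b j) • ∏ j, G j (s j)) := by
    intro d
    rw [Finset.prod_univ_sum, Fintype.piFinset_univ]
    refine Finset.sum_congr rfl fun s _ => ?_
    rw [Finset.prod_smul, smul_smul]
    have h2 : ∏ j, psi (s j * (b j + d j)) = psi (∑ j, s j * d j) * psi (∑ j, s j * b j) := by
      rw [← psi_sum, ← psi_add, ← Finset.sum_add_distrib]
      simp only [mul_add, add_comm]
    rw [h2]
  simp only [h1]
  rw [Finset.sum_comm]
  simp only [← Finset.sum_smul, sum_psi_cw]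
  rw [Finset.smul_sum]
  simp only [ite_smul, zero_smul]
  rw [← Finset.sum_filter]
  rfl

/-! ### The transformed weight enumerator -/

/-- The codewords modulo 9. -/
def cw9 : Finset (Fin 24 → ZMod 9) := Finset.univ.filter (· ∈ code 9)

lemma mem_cw9 {c : Fin 24 → ZMod 9} : c ∈ cw9 ↔ c ∈ code 9 := by simp [cw9]

/-- A lift of a codeword to `ℤ/9ℤ`. -/
def lft (c : Fin 24 → ZMod 3) : Fin 24 → ZMod 9 :=
  if h : c ∈ code 3 then (exists_lift h).choose else 0

lemma lft_mem (c : Fin 24 → ZMod 3) : lft c ∈ code 9 := by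
  unfold lft
  split_ifs with h
  · exact (exists_lift h).choose_spec.1
  · exact Submodule.zero_mem _

lemma red_lft {c : Fin 24 → ZMod 3} (h : c ∈ code 3) (j : Fin 24) : red (lft c j) = c j := by
  unfold lft
  rw [dif_pos h]
  exact congrFun (exists_lift h).choose_spec.2 j

lemma sum_cw9 {R : Type*} [AddCommMonoid R] (F : (Fin 24 → ZMod 9) → R) :
    ∑ w ∈ cw9, F w = ∑ c ∈ cw, ∑ d ∈ cw, F fun j => lft c j + tri (d j) := by
  rw [← Finset.sum_fiberwise_of_maps_to (s := cw9) (t := cw) (g := fun w j => red (w j))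
    (fun w hw => mem_cw.2 (red_mem (mem_cw9.1 hw)))]
  refine Finset.sum_congr rfl fun c hc => ?_
  have hc := mem_cw.1 hc
  symm
  refine Finset.sum_bij (fun d _ => fun j => lft c j + tri (d j)) ?_ ?_ ?_ ?_
  · intro d hd
    rw [Finset.mem_filter, mem_cw9]
    refine ⟨Submodule.add_mem _ (lft_mem c) (tri_mem_iff.2 (mem_cw.1 hd)), ?_⟩
    funext j
    rw [red_add, red_tri, add_zero, red_lft hc]
  · intro d _ d' _ h
    funext j
    have := congrArg dig (congrFun h j)
    rw [dig_add_tri, dig_add_tri] at this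
    exact add_left_cancel this
  · intro w hw
    rw [Finset.mem_filter, mem_cw9] at hw
    obtain ⟨d, hd, h⟩ := lift_unique (lft_mem c) hw.1
      (fun j => (red_lft hc j).trans (congrFun hw.2 j).symm)
    exact ⟨d, mem_cw.2 hd, (funext h).symm⟩
  · intro d _
    rfl

/-- The pairing between a word modulo 9 and a word modulo 3. -/
def chi (w : Fin 24 → ZMod 9) (t : Fin 24 → ZMod 3) : ZMod 3 := ∑ j, t j * dig (w j)

/-- The pairing depends on the word modulo 9 only through its reduction. -/
lemma chi_lift {w w' : Fin 24 → ZMod 9} (hw : w ∈ code 9) (hw' : w' ∈ code 9)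
    (h : ∀ j, red (w j) = red (w' j)) {t : Fin 24 → ZMod 3} (ht : t ∈ code 3) :
    chi w' t = chi w t := by
  obtain ⟨d, hd, hd'⟩ := lift_unique hw hw' h
  simp only [chi, hd', dig_add_tri, mul_add, Finset.sum_add_distrib]
  rw [orth ht hd, add_zero]

/-- Local factors: `x` for a nonzero coordinate of the first word, `y` for one of the second,
`z` for a common zero, and `0` where both are nonzero. -/
def loc {R : Type*} [Zero R] (x y z : R) (c s : ZMod 3) : R :=
  if c = 0 then (if s = 0 then z else y) else (if s = 0 then x else 0)

/-- The value of the substituted variable attached to a coordinate. -/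
def phi {R : Type*} [CommRing R] (x y z : R) (v : ZMod 9) : R :=
  if v = 0 then z + 2 * y else if red v = 0 then z - y else x

lemma sum_psi_mul {R : Type*} [CommRing R] [Algebra ℂ R] (y z : R) (b : ZMod 3) :
    ∑ s, psi (s * b) • (if s = 0 then z else y : R) = if b = 0 then z + 2 * y else z - y := by
  have h3 : ∑ s : ZMod 3, psi (s * b) • (if s = 0 then z else y : R) =
      psi (0 * b) • z + psi (1 * b) • y + psi (2 * b) • y := Fin.sum_univ_three _
  rw [h3, zero_mul, psi_zero, one_smul, one_mul]
  split_ifs with h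
  · subst h; rw [mul_zero, psi_zero, one_smul]; ring
  · have : (2 : ZMod 3) * b = -b := by clear h3 h; revert b; decide
    rw [this, add_assoc, ← add_smul, psi_add_neg h]
    simp [sub_eq_add_neg]

lemma phi_eq {R : Type*} [CommRing R] [Algebra ℂ R] (x y z : R) (v : ZMod 9) :
    phi x y z v = ∑ s, psi (s * dig v) • loc x y z (red v) s := by
  unfold phi loc
  by_cases h : red v = 0
  · simp only [h, if_true]
    rw [sum_psi_mul]
    have : v = 0 ↔ dig v = 0 := by revert v; decide
    simp only [this]
  · have h0 : v ≠ 0 := by rintro rfl; exact h rfl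
    simp [h, h0]

/-- The phase of a pair of codewords. -/
def ph (c s : Fin 24 → ZMod 3) : ℂ := psi (chi (lft c) s)

lemma sum_phi {R : Type*} [CommRing R] [Algebra ℂ R] (x y z : R) :
    ∑ w ∈ cw9, ∏ j, phi x y z (w j) =
      (3 ^ 12 : ℂ) • ∑ c ∈ cw, ∑ s ∈ cw, ph c s • ∏ j, loc x y z (c j) (s j) := by
  rw [sum_cw9, Finset.smul_sum]
  refine Finset.sum_congr rfl fun c hc => ?_
  have hc := mem_cw.1 hc
  simp only [phi_eq, dig_add_tri, red_add, red_tri, add_zero, red_lft hc]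
  exact poisson (fun j => dig (lft c j)) fun j s => loc x y z (c j) s

/-! ### Decoding packed words -/

/-- The ternary word of a packed word. -/
def vec (q : Packed) : Fin 24 → ZMod 3 := fun j => (dg q.1 j : ZMod 3)

/-- The word modulo 9 of a packed word. -/
def vec9 (q : Packed) : Fin 24 → ZMod 9 := fun j => (ent q j : ZMod 9)

lemma dg_lt (x : ℕ × ℕ) (j : ℕ) : dg x j < 3 := by
  unfold dg
  cases bt x.1 j <;> cases bt x.2 j <;> decide

lemma ent_eq (q : Packed) (j : ℕ) : ent q j = dg q.1 j + 3 * dg q.2 j := rfl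

lemma ent_lt (q : Packed) (j : ℕ) : ent q j < 9 := by
  have := dg_lt q.1 j
  have := dg_lt q.2 j
  rw [ent_eq]; omega

lemma red_vec9 (q : Packed) (j : Fin 24) : red (vec9 q j) = vec q j := by
  simp only [vec9, vec, red_natCast, ent_eq]
  push_cast
  have : (3 : ZMod 3) = 0 := rfl
  rw [this]; ring

lemma dig_natCast (a : ℕ) : dig (a : ZMod 9) = ((a % 9 / 3 : ℕ) : ZMod 3) := by
  rw [dig, ZMod.val_natCast]

lemma dig_vec9 (q : Packed) (j : Fin 24) : dig (vec9 q j) = (dg q.2 j : ZMod 3) := by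
  have h1 := dg_lt q.1 j
  have h2 : ent q j % 9 / 3 = dg q.2 j := by
    rw [Nat.mod_eq_of_lt (ent_lt q j), ent_eq]; omega
  rw [vec9, dig_natCast, h2]

lemma vec_ne_zero_iff (q : Packed) (j : Fin 24) : vec q j ≠ 0 ↔ bt q.1.1 j = true := by
  unfold vec dg
  cases bt q.1.1 j <;> cases bt q.1.2 j <;> decide

lemma parityOK_mem {q : Packed} (h : parityOK q = true) : vec9 q ∈ code 9 := by
  intro i
  simp only [parityOK, List.all_eq_true, List.mem_range] at h
  have h2 := cast_of_beq (dvd_refl 9) (h i i.2)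
  rw [sumTo_eq] at h2
  simp only [vec9, ← Nat.cast_mul]
  rw [← Nat.cast_sum]
  exact h2.trans Nat.cast_zero

lemma bt_eq_iff (m j m' j' : ℕ) (h : m / 2 ^ j % 2 = m' / 2 ^ j' % 2) : bt m j = bt m' j' := by
  have key : ∀ a b : ℕ, Nat.land (Nat.shiftRight a b) 1 = a / 2 ^ b % 2 := by
    intro a b
    have : Nat.land (Nat.shiftRight a b) 1 = (a >>> b) &&& 1 := rfl
    rw [this, Nat.and_one_is_mod, Nat.shiftRight_eq_div_pow]
  rw [bt, bt, key, key, h]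

lemma bt_rot (m : ℕ) (j : Fin 24) : bt (rot m) j = bt m (sh j) := by
  apply bt_eq_iff
  obtain ⟨a, e, c, ha, he, rfl⟩ : ∃ a e c, a < 2 ^ 22 ∧ e < 2 ∧ m = a + 2 ^ 22 * e + 2 ^ 23 * c :=
    ⟨m % 2 ^ 22, m / 2 ^ 22 % 2, m / 2 ^ 23, by omega, by omega, by omega⟩
  have hr : rot (a + 2 ^ 22 * e + 2 ^ 23 * c) = 2 * a + e + 2 ^ 23 * c := by
    unfold rot
    have h1 : (a + 2 ^ 22 * e + 2 ^ 23 * c) / 2 ^ 22 % 2 = e := by omega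
    have h2 : (a + 2 ^ 22 * e + 2 ^ 23 * c) / 2 ^ 23 = c := by omega
    have h3 : (a + 2 ^ 22 * e + 2 ^ 23 * c) * 2 % 2 ^ 23 = 2 * a := by omega
    rw [h1, h2, h3]; ring
  rw [hr]
  obtain ⟨j, hj⟩ := j
  rcases Nat.eq_zero_or_pos j with rfl | h0
  · have : (sh ⟨0, hj⟩).val = 22 := rfl
    rw [this]
    have h1 : (a + 2 ^ 22 * e + 2 ^ 23 * c) / 2 ^ 22 = e + 2 * c := by clear hr; omega
    rw [h1]
    show (2 * a + e + 2 ^ 23 * c) / 2 ^ 0 % 2 = _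
    clear hr h1
    omega
  rcases Nat.lt_or_ge j 23 with h23 | h23
  · obtain ⟨i, rfl⟩ : ∃ i, j = i + 1 := ⟨j - 1, by omega⟩
    have hi : (sh ⟨i + 1, hj⟩).val = i := by
      have h1 : Nat.beq (i + 1) 23 = false := by
        rw [Bool.eq_false_iff]; simp; omega
      have h2 : Nat.beq (i + 1) 0 = false := rfl
      simp only [sh, shN, h1, h2, cond_false, Nat.add_sub_cancel]
    have h2 : (2 * a + e + 2 ^ 23 * c) / 2 ^ (i + 1) = (a + 2 ^ 22 * c) / 2 ^ i := by
      rw [pow_succ' 2 i, ← Nat.div_div_eq_div_mul]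
      congr 1
      omega
    have key : ∀ x y : ℕ, x % 2 ^ 22 = y % 2 ^ 22 → x / 2 ^ i % 2 = y / 2 ^ i % 2 := by
      intro x y h
      have h3 : x.testBit i = y.testBit i := by
        have hx := Nat.testBit_mod_two_pow x 22 i
        have hy := Nat.testBit_mod_two_pow y 22 i
        rw [h, hy] at hx
        simpa [show i < 22 by omega] using hx.symm
      rw [Nat.testBit_eq_decide_div_mod_eq, Nat.testBit_eq_decide_div_mod_eq] at h3
      have h4 := decide_eq_decide.1 h3
      omega
    rw [hi]
    show (2 * a + e + 2 ^ 23 * c) / 2 ^ (i + 1) % 2 = _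
    rw [h2]
    apply key
    omega
  · obtain rfl : j = 23 := by omega
    have : (sh ⟨23, hj⟩).val = 23 := rfl
    rw [this]
    show (2 * a + e + 2 ^ 23 * c) / 2 ^ 23 % 2 = _
    have h1 : (a + 2 ^ 22 * e + 2 ^ 23 * c) / 2 ^ 23 = c := by clear hr; omega
    have h2 : (2 * a + e + 2 ^ 23 * c) / 2 ^ 23 = c := by clear hr h1; omega
    rw [h1, h2]

lemma vec9_rotq (q : Packed) (j : Fin 24) : vec9 (rotq q) j = vec9 q (sh j) := by
  simp only [vec9, ent, dg, rotq, bt_rot]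

lemma vec_rotq (q : Packed) (j : Fin 24) : vec (rotq q) j = vec q (sh j) := by
  simp only [vec, dg, rotq, bt_rot]

lemma rots_induction {P : Packed → Prop} (hP : ∀ q, P q → P (rotq q)) (n : ℕ) :
    ∀ q, P q → ∀ q' ∈ rots n q, P q' := by
  induction n with
  | zero => intro q _ q' h; simp [rots] at h
  | succ n ih =>
    intro q hq q' h
    rcases List.mem_cons.1 h with rfl | h
    · exact hq
    · exact ih _ (hP q hq) q' h

/-- The Hamming weight. -/
def wt (t : Fin 24 → ZMod 3) : ℕ := (Finset.univ.filter fun j => t j ≠ 0).card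

lemma wt_shift (t : Fin 24 → ZMod 3) : wt (fun j => t (sh j)) = wt t := by
  unfold wt
  refine Finset.card_bij (fun j _ => sh j) ?_ ?_ ?_
  · intro j hj; simpa using hj
  · intro a _ b _ h; exact sh_bijective.1 h
  · intro j hj
    obtain ⟨k, rfl⟩ := sh_bijective.2 j
    exact ⟨k, by simpa using hj, rfl⟩

lemma wt_neg (t : Fin 24 → ZMod 3) : wt (-t) = wt t := by
  simp [wt]

lemma wtN_eq (q : Packed) : wtN q = wt (vec q) := by
  rw [wtN, sumTo_eq, wt, Finset.card_filter]
  refine Finset.sum_congr rfl fun j _ => ?_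
  unfold vec dg
  cases bt q.1.1 j <;> cases bt q.1.2 j <;> simp <;> decide

lemma wt_rotq (q : Packed) : wt (vec (rotq q)) = wt (vec q) := by
  rw [← wt_shift (vec q)]
  exact congrArg wt (funext fun j => vec_rotq q j)

lemma rotq_mem {q : Packed} (h : vec9 q ∈ code 9) : vec9 (rotq q) ∈ code 9 := by
  have := shift_mem (dvd_refl 9) h
  rwa [← funext (vec9_rotq q)] at this

lemma vec_mem {q : Packed} (h : vec9 q ∈ code 9) : vec q ∈ code 3 := by
  have := red_mem h
  rwa [funext (red_vec9 q)] at this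

lemma L9_spec : ∀ q ∈ L9, vec9 q ∈ code 9 ∧ wt (vec q) = 9 := by
  intro q hq
  obtain ⟨r, hr, hq⟩ := List.mem_flatMap.1 hq
  refine rots_induction (P := fun q => vec9 q ∈ code 9 ∧ wt (vec q) = 9) ?_ 23 r ?_ q hq
  · rintro q ⟨h1, h2⟩
    exact ⟨rotq_mem h1, (wt_rotq q).trans h2⟩
  · refine ⟨parityOK_mem (List.all_eq_true.1 k_parity9 r hr), ?_⟩
    rw [← wtN_eq]
    exact Nat.eq_of_beq_eq_true (List.all_eq_true.1 k_wt9 r hr)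

lemma L24_spec : ∀ q ∈ L24, vec9 q ∈ code 9 ∧ wt (vec q) = 24 ∧ vec q 23 = 1 := by
  have hp := k_parity24
  rw [Bool.and_eq_true] at hp
  intro q hq
  rcases List.mem_cons.1 hq with rfl | hq
  · refine ⟨parityOK_mem hp.1, ?_, by decide⟩
    rw [← wtN_eq]; decide
  refine rots_induction (P := fun q => vec9 q ∈ code 9 ∧ wt (vec q) = 24 ∧ vec q 23 = 1) ?_ 23
    paleyQ ?_ q hq
  · rintro q ⟨h1, h2, h3⟩
    exact ⟨rotq_mem h1, (wt_rotq q).trans h2, (vec_rotq q 23).trans h3⟩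
  · refine ⟨parityOK_mem hp.2, ?_, by decide⟩
    rw [← wtN_eq]; decide

/-! ### Separated lists -/

lemma filt_eq {α : Type} (p : α → Bool) (L : List α) : filt p L = L.filter p := by
  induction L with
  | nil => rfl
  | cons a L ih =>
    rw [List.filter_cons, ← ih]
    cases h : p a <;> simp [filt, h]

lemma cnt_eq {α : Type} (p : α → Bool) (L : List α) : cnt p L = L.countP p := by
  induction L with
  | nil => rfl
  | cons a L ih =>
    rw [List.countP_cons, ← ih]
    cases h : p a <;> simp [cnt, h]

lemma pairwise_of_filter {α : Type} {r : α → α → Prop} (p : α → Bool) {L : List α}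
    (h1 : (L.filter p).Pairwise r) (h2 : (L.filter fun a => !p a).Pairwise r) :
    L.Pairwise fun a b => p a = p b → r a b := by
  induction L with
  | nil => exact List.Pairwise.nil
  | cons a L ih =>
    rw [List.pairwise_cons]
    cases hp : p a
    · rw [List.filter_cons_of_neg (by simp [hp])] at h1
      rw [List.filter_cons_of_pos (by simp [hp]), List.pairwise_cons] at h2
      refine ⟨fun b hb hab => h2.1 b (List.mem_filter.2 ⟨hb, by simp [← hab]⟩), ih h1 h2.2⟩
    · rw [List.filter_cons_of_pos (by simp [hp]), List.pairwise_cons] at h1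
      rw [List.filter_cons_of_neg (by simp [hp])] at h2
      refine ⟨fun b hb hab => h1.1 b (List.mem_filter.2 ⟨hb, by simp [← hab]⟩), ih h1.2 h2⟩

lemma sepBy_pairwise {α : Type} (p : ℕ → α → Bool) (js : List ℕ) :
    ∀ L : List α, sepBy p js L = true → L.Pairwise fun a b => ∃ j ∈ js, p j a ≠ p j b := by
  induction js with
  | nil =>
    intro L h
    have h : L.length ≤ 1 := Nat.le_of_ble_eq_true h
    match L, h with
    | [], _ => exact List.Pairwise.nil
    | [a], _ => exact List.pairwise_singleton _ _
  | cons j js ih =>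
    intro L h
    match L, h with
    | [], _ => exact List.Pairwise.nil
    | [a], _ => exact List.pairwise_singleton _ _
    | a :: b :: L, h =>
      have h' : Bool.rec false (sepBy p js (filt (p j) (a :: b :: L)))
        (sepBy p js (filt (fun a => !p j a) (a :: b :: L))) = true := h
      cases h2 : sepBy p js (filt (fun a => !p j a) (a :: b :: L)) with
      | false => rw [h2] at h'; exact absurd h' (by simp)
      | true =>
        rw [h2] at h'
        have h1 : sepBy p js (filt (p j) (a :: b :: L)) = true := h'
        rw [filt_eq] at h1 h2
        refine (pairwise_of_filter (p j) (ih _ h1) (ih _ h2)).imp ?_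
        intro x y hxy
        by_cases hp : p j x = p j y
        · obtain ⟨k, hk, hk'⟩ := hxy hp
          exact ⟨k, List.mem_cons_of_mem _ hk, hk'⟩
        · exact ⟨j, List.mem_cons_self, hp⟩

/-- The relation between listed words which represent distinct words up to sign. -/
def Apart (a b : Packed) : Prop := vec a ≠ vec b ∧ vec a ≠ -vec b

lemma L9_apart : L9.Pairwise Apart := by
  refine (sepBy_pairwise _ _ _ k_sep9).imp ?_
  rintro a b ⟨j, hj, h⟩
  have hj := List.mem_range.1 hj
  have ha := vec_ne_zero_iff a ⟨j, hj⟩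
  have hb := vec_ne_zero_iff b ⟨j, hj⟩
  refine ⟨fun hab => h ?_, fun hab => h ?_⟩
  · rw [hab] at ha
    exact Bool.eq_iff_iff.2 (ha.symm.trans hb)
  · rw [hab, Pi.neg_apply, neg_ne_zero] at ha
    exact Bool.eq_iff_iff.2 (ha.symm.trans hb)

lemma ne_zero_of_wt24 {t : Fin 24 → ZMod 3} (h : wt t = 24) (j : Fin 24) : t j ≠ 0 := by
  have h1 : (Finset.univ.filter fun j => t j ≠ 0) = Finset.univ := by
    rw [← Finset.card_eq_iff_eq_univ]; simpa [wt] using h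
  have h2 := Finset.mem_univ j
  rw [← h1, Finset.mem_filter] at h2
  exact h2.2

/-- A coordinate of a word without zeros is determined by its sign bit. -/
lemma vec_eq_of_full {a : Packed} (h : wt (vec a) = 24) (j : Fin 24) :
    vec a j = if bt a.1.2 j then 1 else 2 := by
  have := (vec_ne_zero_iff a j).1 (ne_zero_of_wt24 h j)
  simp only [vec, dg, this, cond_true]
  cases bt a.1.2 j <;> simp

lemma L24_apart : L24.Pairwise Apart := by
  refine (sepBy_pairwise _ _ _ k_sep24).imp_of_mem ?_
  rintro a b ha hb ⟨j, hj, h⟩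
  have hj := List.mem_range.1 hj
  obtain ⟨-, ha, ha'⟩ := L24_spec a ha
  obtain ⟨-, hb, hb'⟩ := L24_spec b hb
  refine ⟨fun hab => h ?_, fun hab => ?_⟩
  · have := congrFun hab ⟨j, hj⟩
    rw [vec_eq_of_full ha, vec_eq_of_full hb] at this
    revert this
    cases bt a.1.2 j <;> cases bt b.1.2 j <;> simp <;> decide
  · have := congrFun hab 23
    rw [Pi.neg_apply, ha', hb'] at this
    revert this; decide

lemma neg_ne_self {t : Fin 24 → ZMod 3} (h : t ≠ 0) : t ≠ -t := by
  intro h1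
  apply h
  funext j
  have key : ∀ a : ZMod 3, a = -a → a = 0 := by decide
  exact key _ (congrFun h1 j)

/-- The words listed in `L` and their negatives. -/
def sgn (L : List Packed) : List (Fin 24 → ZMod 3) := L.map vec ++ L.map fun q => -vec q

lemma sgn_nodup {L : List Packed} (h : L.Pairwise Apart) (h0 : ∀ q ∈ L, vec q ≠ 0) :
    (sgn L).Nodup := by
  have hs : ∀ a b, Apart a b → Apart b a := by
    rintro a b ⟨h1, h2⟩
    exact ⟨h1.symm, fun h => h2 (by rw [h, neg_neg])⟩
  rw [sgn, List.nodup_append']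
  refine ⟨?_, ?_, ?_⟩
  · exact List.pairwise_map.2 (h.imp fun h => h.1)
  · exact List.pairwise_map.2 (h.imp fun h h' => h.1 (neg_injective h'))
  · intro t ht ht'
    obtain ⟨a, ha, rfl⟩ := List.mem_map.1 ht
    obtain ⟨b, hb, hab⟩ := List.mem_map.1 ht'
    by_cases hE : a = b
    · subst hE
      exact neg_ne_self (h0 a ha) hab.symm
    · exact (haveI : Std.Symm Apart := ⟨hs⟩; h.forall ha hb hE).2 hab.symm

lemma length_sgn (L : List Packed) : (sgn L).length = 2 * L.length := by
  simp [sgn]; ring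

lemma sum_sgn {L : List Packed} (h : L.Pairwise Apart) (h0 : ∀ q ∈ L, vec q ≠ 0)
    {R : Type*} [AddCommMonoid R] (F : (Fin 24 → ZMod 3) → R) :
    ∑ t ∈ (sgn L).toFinset, F t = (L.map fun q => F (vec q) + F (-vec q)).sum := by
  rw [List.sum_toFinset F (sgn_nodup h h0), sgn, List.map_append, List.sum_append, List.map_map,
    List.map_map, List.sum_map_add]
  rfl

lemma mem_sgn {L : List Packed} {t : Fin 24 → ZMod 3} :
    t ∈ sgn L ↔ ∃ q ∈ L, t = vec q ∨ t = -vec q := by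
  simp only [sgn, List.mem_append, List.mem_map]
  constructor
  · rintro (⟨q, h, rfl⟩ | ⟨q, h, rfl⟩)
    · exact ⟨q, h, Or.inl rfl⟩
    · exact ⟨q, h, Or.inr rfl⟩
  · rintro ⟨q, h, rfl | rfl⟩
    · exact Or.inl ⟨q, h, rfl⟩
    · exact Or.inr ⟨q, h, rfl⟩

/-! ### The weight distribution modulo 3 -/

lemma three_dvd_wt {t : Fin 24 → ZMod 3} (ht : t ∈ code 3) : 3 ∣ wt t := by
  have h := orth ht ht
  have key : ∀ a : ZMod 3, a * a = if a ≠ 0 then 1 else 0 := by decide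
  simp only [key] at h
  rw [Finset.sum_boole, ZMod.natCast_eq_zero_iff] at h
  exact h

lemma wt_le (t : Fin 24 → ZMod 3) : wt t ≤ 24 := by
  unfold wt
  exact (Finset.card_le_univ _).trans (by simp)

/-- The codewords modulo 3 of weight `k`. -/
def W (k : ℕ) : Finset (Fin 24 → ZMod 3) := cw.filter fun t => wt t = k

lemma mem_W {k : ℕ} {t : Fin 24 → ZMod 3} : t ∈ W k ↔ t ∈ code 3 ∧ wt t = k := by
  rw [W, Finset.mem_filter, mem_cw]

lemma neg_mem_W {k : ℕ} {t : Fin 24 → ZMod 3} (h : t ∈ W k) : -t ∈ W k := by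
  rw [mem_W] at *
  exact ⟨Submodule.neg_mem _ h.1, by rw [wt_neg, h.2]⟩

lemma sum_cw_wt {R : Type*} [CommRing R] (f : ℕ → R) :
    ∑ c ∈ cw, f (wt c) = ∑ k ∈ Finset.range 9, ((W (3 * k)).card : R) * f (3 * k) := by
  have h : ∀ c ∈ cw, wt c / 3 ∈ Finset.range 9 := by
    intro c _
    have := wt_le c
    rw [Finset.mem_range]; omega
  rw [← Finset.sum_fiberwise_of_maps_to h]
  refine Finset.sum_congr rfl fun k _ => ?_
  have hW : cw.filter (fun c => wt c / 3 = k) = W (3 * k) := by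
    refine Finset.filter_congr fun c hc => ?_
    have := three_dvd_wt (mem_cw.1 hc)
    omega
  rw [hW, ← nsmul_eq_mul]
  refine Finset.sum_eq_card_nsmul fun c hc => ?_
  rw [(mem_W.1 hc).2]

lemma prod_ite_wt {R : Type*} [CommRing R] (a b : R) (t : Fin 24 → ZMod 3) :
    ∏ j, (if t j = 0 then a else b) = a ^ (24 - wt t) * b ^ wt t := by
  rw [Finset.prod_ite, Finset.prod_const, Finset.prod_const]
  congr 2
  have := Finset.card_filter_add_card_filter_not (s := (Finset.univ : Finset (Fin 24)))
    (p := fun j => t j = 0)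
  rw [Finset.card_univ, Fintype.card_fin] at this
  simp only [wt, ne_eq]
  omega

/-- The MacWilliams identity for the self-dual code, evaluated at an integer. -/
lemma macWilliams (u : ℤ) :
    ∑ k ∈ Finset.range 9, ((W (3 * k)).card : ℤ) * ((u + 2) ^ (24 - 3 * k) * (u - 1) ^ (3 * k)) =
      3 ^ 12 * ∑ k ∈ Finset.range 9, ((W (3 * k)).card : ℤ) * u ^ (24 - 3 * k) := by
  have h := poisson (R := ℂ) 0 (fun _ s => if s = 0 then (u : ℂ) else 1)
  simp only [Pi.zero_apply, zero_add, sum_psi_mul, mul_zero, Finset.sum_const_zero, psi_zero,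
    one_smul, prod_ite_wt, one_pow, mul_one] at h
  rw [smul_eq_mul] at h
  rw [sum_cw_wt (fun k => ((u : ℂ) + 2) ^ (24 - k) * ((u : ℂ) - 1) ^ k),
    sum_cw_wt (fun k => (u : ℂ) ^ (24 - k))] at h
  exact_mod_cast h

lemma wt_eq_zero {t : Fin 24 → ZMod 3} : wt t = 0 ↔ t = 0 := by
  rw [wt, Finset.card_eq_zero, Finset.filter_eq_empty_iff]
  constructor
  · intro h; funext j; simpa using h (Finset.mem_univ j)
  · rintro rfl; simp

lemma W_zero : W 0 = {0} := by
  ext t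
  rw [mem_W, wt_eq_zero, Finset.mem_singleton]
  exact ⟨fun h => h.2, fun h => ⟨h ▸ Submodule.zero_mem _, h⟩⟩

lemma weight_relations :
    ((W 9).card : ℤ) = 4048 - 6 * (W 6).card + 249 * (W 3).card ∧
      ((W 24).card : ℤ) = 48 + (W 6).card - 21 * (W 3).card := by
  have h0 := macWilliams 0
  have h1 := macWilliams 1
  have h2 := macWilliams 2
  have h3 := macWilliams 3
  have h4 := macWilliams (-1)
  have h5 := macWilliams (-3)
  have h6 := macWilliams 5
  simp only [Finset.sum_range_succ, Finset.sum_range_zero] at h0 h1 h2 h3 h4 h5 h6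
  norm_num [W_zero] at h0 h1 h2 h3 h4 h5 h6
  constructor <;> linarith

lemma ones_mem : oneQ ∈ L24 := List.mem_cons_self

/-- A word of weight 3 would be orthogonal to all words of weight 24, which would then agree
up to a fixed sign in two coordinates. -/
lemma W_three : W 3 = ∅ := by
  rw [Finset.eq_empty_iff_forall_notMem]
  intro t ht
  obtain ⟨ht, hw⟩ := mem_W.1 ht
  obtain ⟨i, j, k, hij, hik, hjk, hs⟩ := Finset.card_eq_three.1 hw
  have hne : ∀ l, l ∈ ({i, j, k} : Finset (Fin 24)) → t l ≠ 0 := by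
    intro l hl
    rw [← hs, Finset.mem_filter] at hl
    exact hl.2
  have key : ∀ a b c : ZMod 3, a ≠ 0 → b ≠ 0 → c ≠ 0 → a + (b + c) = 0 → a = b := by decide
  have hall : ∀ q ∈ L24, t i * vec q i = t j * vec q j := by
    intro q hq
    obtain ⟨h1, h2, -⟩ := L24_spec q hq
    have h3 := orth ht (vec_mem h1)
    have hn := ne_zero_of_wt24 h2
    refine key _ _ (t k * vec q k) (mul_ne_zero (hne i (by simp)) (hn i))
      (mul_ne_zero (hne j (by simp)) (hn j)) (mul_ne_zero (hne k (by simp)) (hn k)) ?_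
    rw [← h3, ← Finset.sum_subset (Finset.subset_univ {i, j, k})]
    · rw [Finset.sum_insert (by simp [hij, hik]), Finset.sum_insert (by simp [hjk]),
        Finset.sum_singleton]
    · intro l _ hl
      have : t l = 0 := by
        by_contra hl'
        exact hl (hs ▸ Finset.mem_filter.2 ⟨Finset.mem_univ l, hl'⟩)
      rw [this, zero_mul]
  have h1 : ∀ l, vec oneQ l = 1 := by decide
  have hT := hall oneQ ones_mem
  rw [h1, h1, mul_one, mul_one] at hT
  have hall' : ∀ q ∈ L24, bt q.1.2 i = bt q.1.2 j := by
    intro q hq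
    have h := hall q hq
    obtain ⟨-, h2, -⟩ := L24_spec q hq
    rw [hT, vec_eq_of_full h2, vec_eq_of_full h2] at h
    have h0 := hne j (by simp)
    revert h h0
    generalize t j = a
    cases bt q.1.2 i <;> cases bt q.1.2 j <;> revert a <;> decide
  have hc := k_col
  simp only [List.all_eq_true, List.mem_range, List.any_eq_true] at hc
  rcases lt_or_gt_of_ne hij with h | h
  · obtain ⟨q, hq, hx⟩ := hc j j.2 i h
    rw [hall' q hq] at hx
    simp at hx
  · obtain ⟨q, hq, hx⟩ := hc i i.2 j h
    rw [hall' q hq] at hx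
    simp at hx

lemma vec_ne_zero_of_wt {q : Packed} {k : ℕ} (h : wt (vec q) = k + 1) : vec q ≠ 0 := by
  intro h0
  rw [h0, wt_eq_zero.2 rfl] at h
  omega

lemma sgn_L9_sub : (sgn L9).toFinset ⊆ W 9 := by
  intro t ht
  obtain ⟨q, hq, h⟩ := mem_sgn.1 (List.mem_toFinset.1 ht)
  have h1 : vec q ∈ W 9 := mem_W.2 ⟨vec_mem (L9_spec q hq).1, (L9_spec q hq).2⟩
  rcases h with rfl | rfl
  · exact h1
  · exact neg_mem_W h1

lemma sgn_L24_sub : (sgn L24).toFinset ⊆ W 24 := by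
  intro t ht
  obtain ⟨q, hq, h⟩ := mem_sgn.1 (List.mem_toFinset.1 ht)
  have h1 : vec q ∈ W 24 := mem_W.2 ⟨vec_mem (L24_spec q hq).1, (L24_spec q hq).2.1⟩
  rcases h with rfl | rfl
  · exact h1
  · exact neg_mem_W h1

lemma L9_ne : ∀ q ∈ L9, vec q ≠ 0 := fun q hq => vec_ne_zero_of_wt (L9_spec q hq).2
lemma L24_ne : ∀ q ∈ L24, vec q ≠ 0 := fun q hq => vec_ne_zero_of_wt (L24_spec q hq).2.1

lemma card_sgn_L9 : (sgn L9).toFinset.card = 4048 := by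
  rw [List.toFinset_card_of_nodup (sgn_nodup L9_apart L9_ne), length_sgn, k_len9]

lemma card_sgn_L24 : (sgn L24).toFinset.card = 48 := by
  rw [List.toFinset_card_of_nodup (sgn_nodup L24_apart L24_ne), length_sgn]
  rfl

lemma card_W : (W 6).card = 0 ∧ (W 9).card = 4048 ∧ (W 24).card = 48 := by
  obtain ⟨h1, h2⟩ := weight_relations
  have h3 := Finset.card_le_card sgn_L9_sub
  rw [card_sgn_L9] at h3
  rw [W_three, Finset.card_empty] at h1 h2
  omega

lemma W9_eq : W 9 = (sgn L9).toFinset :=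
  (Finset.eq_of_subset_of_card_le sgn_L9_sub (by rw [card_sgn_L9, card_W.2.1])).symm

lemma W24_eq : W 24 = (sgn L24).toFinset :=
  (Finset.eq_of_subset_of_card_le sgn_L24_sub (by rw [card_sgn_L24, card_W.2.2])).symm

/-- The minimum weight is 9. -/
lemma nine_le_wt {t : Fin 24 → ZMod 3} (ht : t ∈ code 3) (h0 : t ≠ 0) : 9 ≤ wt t := by
  by_contra h
  have h3 := three_dvd_wt ht
  have hz : wt t ≠ 0 := fun h => h0 (wt_eq_zero.1 h)
  have : wt t = 3 ∨ wt t = 6 := by omega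
  rcases this with h | h
  · have := mem_W.2 ⟨ht, h⟩
    rw [W_three] at this
    exact Finset.notMem_empty _ this
  · have := mem_W.2 ⟨ht, h⟩
    rw [Finset.card_eq_zero.1 card_W.1] at this
    exact Finset.notMem_empty _ this

/-! ### Phase sums over disjoint pairs -/

/-- Two words with disjoint supports. -/
def Disj (c t : Fin 24 → ZMod 3) : Prop := ∀ j, c j = 0 ∨ t j = 0

lemma Disj.symm {c t : Fin 24 → ZMod 3} (h : Disj c t) : Disj t c := fun j => (h j).symm

lemma disj_comm {c t : Fin 24 → ZMod 3} : Disj c t ↔ Disj t c := ⟨Disj.symm, Disj.symm⟩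

lemma disj_neg {c t : Fin 24 → ZMod 3} : Disj c (-t) ↔ Disj c t := by
  simp [Disj]

lemma neg_disj {c t : Fin 24 → ZMod 3} : Disj (-c) t ↔ Disj c t := by
  simp [Disj]

lemma Disj.wt_le {c t : Fin 24 → ZMod 3} (h : Disj c t) : wt c + wt t ≤ 24 := by
  unfold wt
  rw [← Finset.card_union_of_disjoint]
  · exact (Finset.card_le_univ _).trans (by simp)
  · rw [Finset.disjoint_filter]
    intro j _ h1 h2
    exact (h j).elim h1 h2

lemma chi_neg_right (w : Fin 24 → ZMod 9) (t : Fin 24 → ZMod 3) : chi w (-t) = -chi w t := by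
  simp [chi]

lemma chi_zero_right (w : Fin 24 → ZMod 9) : chi w 0 = 0 := by simp [chi]

/-- The sum of the phases of a word modulo 9 against the disjoint words of weight `k`. -/
def asum (w : Fin 24 → ZMod 9) (k : ℕ) : ℂ :=
  ∑ t ∈ W k, if Disj (fun j => red (w j)) t then psi (chi w t) else 0

lemma asum_lift {w w' : Fin 24 → ZMod 9} (hw : w ∈ code 9) (hw' : w' ∈ code 9)
    (h : ∀ j, red (w j) = red (w' j)) (k : ℕ) : asum w' k = asum w k := by
  refine Finset.sum_congr rfl fun t ht => ?_
  rw [chi_lift hw hw' h (mem_W.1 ht).1]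
  simp only [h]

lemma sum_W_neg {R : Type*} [AddCommMonoid R] (k : ℕ) (F : (Fin 24 → ZMod 3) → R) :
    ∑ t ∈ W k, F (-t) = ∑ t ∈ W k, F t :=
  Finset.sum_bij' (fun t _ => -t) (fun t _ => -t) (fun _ h => neg_mem_W h)
    (fun _ h => neg_mem_W h) (fun _ _ => neg_neg _) (fun _ _ => neg_neg _) (fun _ _ => rfl)

lemma sum_W_shift {R : Type*} [AddCommMonoid R] (k : ℕ) (F : (Fin 24 → ZMod 3) → R) :
    ∑ t ∈ W k, F (fun j => t (sh j)) = ∑ t ∈ W k, F t := by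
  have hm : Set.MapsTo (fun (t : Fin 24 → ZMod 3) j => t (sh j)) (W k) (W k) := by
    intro t ht
    obtain ⟨h1, h2⟩ := mem_W.1 (Finset.mem_coe.1 ht)
    exact Finset.mem_coe.2 (mem_W.2 ⟨shift_mem (by norm_num) h1, (wt_shift t).trans h2⟩)
  have hi : Function.Injective (fun (t : Fin 24 → ZMod 3) j => t (sh j)) :=
    fun s t h => sh_bijective.2.injective_comp_right h
  exact Finset.sum_nbij _ hm hi.injOn
    (Finset.surjOn_of_injOn_of_card_le _ hm hi.injOn le_rfl) (fun _ _ => rfl)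

lemma asum_shift (w : Fin 24 → ZMod 9) (k : ℕ) : asum (fun j => w (sh j)) k = asum w k := by
  unfold asum
  rw [← sum_W_shift k]
  refine Finset.sum_congr rfl fun t _ => ?_
  have h1 : chi (fun j => w (sh j)) (fun j => t (sh j)) = chi w t :=
    sh_bijective.sum_comp fun j => t j * dig (w j)
  have h2 : Disj (fun j => red (w (sh j))) (fun j => t (sh j)) ↔ Disj (fun j => red (w j)) t :=
    (sh_bijective.2.forall (p := fun j => red (w j) = 0 ∨ t j = 0)).symm
  rw [h1]
  simp only [h2]

lemma chi_neg_left {w : Fin 24 → ZMod 9} {t : Fin 24 → ZMod 3}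
    (h : Disj (fun j => red (w j)) t) : chi (-w) t = -chi w t := by
  unfold chi
  rw [← Finset.sum_neg_distrib]
  refine Finset.sum_congr rfl fun j _ => ?_
  have key : ∀ v : ZMod 9, red v = 0 → dig (-v) = -dig v := by decide
  rcases h j with h | h
  · rw [Pi.neg_apply, key _ h, mul_neg]
  · rw [h]; simp

lemma asum_neg (w : Fin 24 → ZMod 9) (k : ℕ) : asum (-w) k = asum w k := by
  unfold asum
  rw [← sum_W_neg k]
  refine Finset.sum_congr rfl fun t _ => ?_
  have h2 : Disj (fun j => red ((-w) j)) (-t) ↔ Disj (fun j => red (w j)) t := by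
    simp only [Pi.neg_apply, red_neg]
    rw [disj_neg]
    exact neg_disj (c := fun j => red (w j))
  simp only [h2]
  split_ifs with h
  · rw [chi_neg_left (disj_neg.2 h), chi_neg_right, neg_neg]
  · rfl

lemma testBit_eq_bt (m j : ℕ) : m.testBit j = bt m j := by
  have h : bt m j = Nat.beq ((m >>> j) &&& 1) 1 := rfl
  rw [h, Nat.testBit_eq_decide_div_mod_eq, Nat.and_one_is_mod, Nat.shiftRight_eq_div_pow,
    Bool.eq_iff_iff]
  simp

lemma land_eq_zero_iff {a b : ℕ} (hb : b < 2 ^ 24) :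
    Nat.land a b = 0 ↔ ∀ j : Fin 24, bt a j = false ∨ bt b j = false := by
  have h0 : Nat.land a b = a &&& b := rfl
  rw [h0]
  constructor
  · intro h j
    have h1 := congrArg (fun m => Nat.testBit m j) h
    simp only [Nat.testBit_and] at h1
    rw [testBit_eq_bt, testBit_eq_bt, testBit_eq_bt] at h1
    have h2 : bt 0 j = false := by rw [← testBit_eq_bt, Nat.zero_testBit]
    rwa [h2, Bool.and_eq_false_iff] at h1
  · intro h
    refine Nat.eq_of_testBit_eq fun j => ?_
    rw [Nat.testBit_and, Nat.zero_testBit]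
    rcases Nat.lt_or_ge j 24 with hj | hj
    · rw [testBit_eq_bt, testBit_eq_bt]
      rcases h ⟨j, hj⟩ with h | h <;> simp [show bt _ j = false from h]
    · rw [Nat.testBit_lt_two_pow (hb.trans_le (Nat.pow_le_pow_right (by norm_num) hj)),
        Bool.and_false]

lemma disj_vec_iff {r : Packed} (hr : r.1.1 < 2 ^ 24) (t : Packed) :
    Disj (vec r) (vec t) ↔ Nat.land t.1.1 r.1.1 = 0 := by
  rw [land_eq_zero_iff hr]
  refine forall_congr' fun j => ?_
  have h1 := vec_ne_zero_iff r j
  have h2 := vec_ne_zero_iff t j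
  rw [← not_iff_not.trans (Iff.rfl), not_or, not_or, Bool.not_eq_false, Bool.not_eq_false, ← h1,
    ← h2, and_comm]

lemma chi_vec (r t : Packed) : chi (vec9 r) (vec t) = (dotN t.1 r.2 : ZMod 3) := by
  have h : dotN t.1 r.2 = sumTo (fun j => dg t.1 j * dg r.2 j) 24 % 3 := rfl
  rw [h, sumTo_eq, ZMod.natCast_mod]
  push_cast
  simp only [chi, dig_vec9]
  rfl

lemma chi_vec_eq_zero (r t : Packed) : chi (vec9 r) (vec t) = 0 ↔ dotN t.1 r.2 = 0 := by
  rw [chi_vec, ZMod.natCast_eq_zero_iff]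
  have : dotN t.1 r.2 < 3 := Nat.mod_lt _ (by norm_num)
  omega

lemma sum_map_count {α : Type} (f : α → ℂ) (p q : α → Bool) (L : List α)
    (h : ∀ a ∈ L, f a = (if p a then 2 else 0) - if q a then 1 else 0) :
    (L.map f).sum = 2 * (cnt p L : ℂ) - cnt q L := by
  rw [cnt_eq, cnt_eq]
  induction L with
  | nil => simp
  | cons a L ih =>
    rw [List.map_cons, List.sum_cons, ih fun b hb => h b (List.mem_cons_of_mem _ hb),
      h a List.mem_cons_self, List.countP_cons, List.countP_cons]
    split_ifs <;> push_cast <;> ring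

lemma k_mask : (reps.all fun q => Nat.blt q.1.1 (2 ^ 24)) = true := by decide +kernel

/-- Up to sign, each representative is disjoint from 7 words of weight 9 with trivial phase and
18 words with nontrivial phase. -/
lemma asum_reps {r : Packed} (hr : r ∈ reps) : asum (vec9 r) 9 = -4 := by
  have hk := List.all_eq_true.1 k_phases r hr
  rw [Bool.and_eq_true] at hk
  have h7 := Nat.eq_of_beq_eq_true hk.1
  have h18 := Nat.eq_of_beq_eq_true hk.2
  have hm : r.1.1 < 2 ^ 24 := Nat.le_of_ble_eq_true (List.all_eq_true.1 k_mask r hr)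
  unfold asum
  rw [W9_eq, sum_sgn L9_apart L9_ne]
  simp only [red_vec9, disj_neg]
  rw [sum_map_count (L := L9) (p := fun t : Packed => bif Nat.beq (Nat.land t.1.1 r.1.1) 0 then
    Bool.rec (!true) true (Nat.beq (dotN t.1 r.2) 0) else false)
    (q := fun t : Packed => bif Nat.beq (Nat.land t.1.1 r.1.1) 0 then
    Bool.rec (!false) false (Nat.beq (dotN t.1 r.2) 0) else false)]
  · change 2 * (phases r true : ℂ) - (phases r false : ℂ) = -4
    rw [h7, h18]; norm_num
  · intro t _
    have hd := disj_vec_iff hm t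
    have hc := chi_vec_eq_zero r t
    by_cases h1 : Nat.land t.1.1 r.1.1 = 0
    · have hd' : Disj (fun j => vec r j) (vec t) := hd.2 h1
      have hb : Nat.beq (Nat.land t.1.1 r.1.1) 0 = true := by rw [h1]; rfl
      rw [if_pos hd', if_pos hd', hb, chi_neg_right]
      by_cases h2 : dotN t.1 r.2 = 0
      · rw [hc.2 h2, h2, neg_zero, psi_zero]
        simp; norm_num
      · rw [psi_add_neg (mt hc.1 h2)]
        have hb2 : Nat.beq (dotN t.1 r.2) 0 = false := by
          rw [Bool.eq_false_iff]; exact fun h => h2 (Nat.eq_of_beq_eq_true h)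
        rw [hb2]; simp
    · have hd' : ¬ Disj (fun j => vec r j) (vec t) := mt hd.1 h1
      have hb : Nat.beq (Nat.land t.1.1 r.1.1) 0 = false := by
        rw [Bool.eq_false_iff]; exact fun h => h1 (Nat.eq_of_beq_eq_true h)
      rw [if_neg hd', if_neg hd', hb]; simp

lemma asum_L9 : ∀ q ∈ L9, asum (vec9 q) 9 = -4 := by
  intro q hq
  obtain ⟨r, hr, hq⟩ := List.mem_flatMap.1 hq
  refine rots_induction (P := fun q => asum (vec9 q) 9 = -4) ?_ 23 r (asum_reps hr) q hq
  intro q h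
  rw [← h, ← asum_shift (vec9 q)]
  exact congrArg (asum · 9) (funext (vec9_rotq q))

lemma asum_nine {c : Fin 24 → ZMod 3} (hc : c ∈ W 9) : asum (lft c) 9 = -4 := by
  have hc' := (mem_W.1 hc).1
  rw [W9_eq, List.mem_toFinset, mem_sgn] at hc
  obtain ⟨q, hq, h⟩ := hc
  have hm := (L9_spec q hq).1
  rw [← asum_L9 q hq]
  rcases h with rfl | rfl
  · exact asum_lift hm (lft_mem _) (fun j => by rw [red_vec9, red_lft hc']) 9
  · rw [← asum_neg (vec9 q)]
    refine asum_lift (Submodule.neg_mem _ hm) (lft_mem _) (fun j => ?_) 9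
    rw [red_lft hc', Pi.neg_apply, red_neg, red_vec9, Pi.neg_apply]

/-! ### Disjoint pairs filling all coordinates -/

/-- Packed word with a sign, as a word modulo 9. -/
def svec9 (s : Bool) (q : Packed) : Fin 24 → ZMod 9 := if s then -vec9 q else vec9 q

lemma sent_cast (s : Bool) (q : Packed) (j : Fin 24) : (sent s q j : ZMod 9) = svec9 s q j := by
  cases s
  · rfl
  · have h := ent_lt q j
    have h1 : sent true q j = 9 - ent q j := rfl
    rw [h1, Nat.cast_sub h.le]
    have h9 : ((9 : ℕ) : ZMod 9) = 0 := rfl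
    rw [h9, zero_sub]
    rfl

lemma svec9_mem (s : Bool) {q : Packed} (h : vec9 q ∈ code 9) : svec9 s q ∈ code 9 := by
  cases s
  · exact h
  · exact Submodule.neg_mem _ h

lemma exists_svec9 {r : Fin 24 → ZMod 3} (h : r ∈ W 24) :
    ∃ s, ∃ q ∈ L24, ∀ j, red (svec9 s q j) = r j := by
  rw [W24_eq, List.mem_toFinset, mem_sgn] at h
  obtain ⟨q, hq, rfl | rfl⟩ := h
  · exact ⟨false, q, hq, red_vec9 q⟩
  · refine ⟨true, q, hq, fun j => ?_⟩
    rw [Pi.neg_apply, ← red_vec9, ← red_neg]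
    rfl

/-- What `pairOK` says about the words `r₁ = ± q₁`, `r₂ = ± q₂`. -/
lemma pairOK_spec {s₁ s₂ : Bool} {q₁ q₂ : Packed} (h : pairOK s₁ s₂ q₁ q₂ = true)
    {r₁ r₂ : Fin 24 → ZMod 3} (h₁ : r₁ ∈ W 24) (h₂ : r₂ ∈ W 24)
    (hr₁ : ∀ j, red (svec9 s₁ q₁ j) = r₁ j) (hr₂ : ∀ j, red (svec9 s₂ q₂ j) = r₂ j) :
    wt (r₁ + r₂) = 12 ∧ chi (svec9 s₁ q₁ + svec9 s₂ q₂) (r₁ - r₂) ≠ 0 := by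
  unfold pairOK at h
  rw [Bool.and_eq_true, Bool.not_eq_true', sumTo_eq, sumTo_eq] at h
  obtain ⟨hw, hp⟩ := h
  have hs : ∀ j : Fin 24, Nat.beq (Nat.mod (Nat.add (sent s₁ q₁ j) (sent s₂ q₂ j)) 3) 0 =
      decide (r₁ j + r₂ j = 0) := by
    intro j
    rw [← hr₁, ← hr₂, ← red_add, ← sent_cast, ← sent_cast, ← Nat.cast_add, red_natCast,
      Bool.eq_iff_iff, decide_eq_true_iff, ZMod.natCast_eq_zero_iff]
    have h3 : ∀ n, Nat.beq (Nat.mod n 3) 0 = true ↔ 3 ∣ n := by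
      intro n
      rw [Nat.dvd_iff_mod_eq_zero]
      exact Iff.of_eq Nat.beq_eq
    exact h3 _
  simp only [hs] at hw hp
  constructor
  · rw [← Nat.eq_of_beq_eq_true hw, wt, Finset.card_filter]
    refine Finset.sum_congr rfl fun j _ => ?_
    by_cases hj : r₁ j + r₂ j = 0 <;> simp [hj]
  · intro h0
    rw [Bool.eq_false_iff] at hp
    apply hp
    have h3 : ∀ n, 3 ∣ n → Nat.beq (Nat.mod n 3) 0 = true := by
      intro n hn
      exact Nat.beq_eq.mpr (Nat.mod_eq_zero_of_dvd hn)
    apply h3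
    rw [← ZMod.natCast_eq_zero_iff, ← neg_eq_zero]
    refine Eq.trans ?_ h0
    rw [chi, Nat.cast_sum, ← Finset.sum_neg_distrib]
    refine Finset.sum_congr rfl fun j _ => ?_
    have n1 := ne_zero_of_wt24 (mem_W.1 h₁).2 j
    have n2 := ne_zero_of_wt24 (mem_W.1 h₂).2 j
    have key : ∀ a b : ZMod 3, a ≠ 0 → b ≠ 0 → (a + b = 0 → a - b = -a) ∧
      (a + b ≠ 0 → a - b = 0) := by decide
    by_cases hj : r₁ j + r₂ j = 0
    · rw [Pi.sub_apply, (key _ _ n1 n2).1 hj]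
      simp only [hj, decide_true, cond_true, Pi.add_apply]
      rw [← sent_cast, ← sent_cast, ← Nat.cast_add, dig_natCast, ← hr₁, ← sent_cast, red_natCast,
        neg_mul, ← Nat.cast_mul]
      rfl
    · rw [Pi.sub_apply, (key _ _ n1 n2).2 hj]
      simp [hj]

lemma exists_pair {r₁ r₂ : Fin 24 → ZMod 3} (h₁ : r₁ ∈ W 24) (h₂ : r₂ ∈ W 24)
    (hne : r₂ ≠ r₁) (hne' : r₂ ≠ -r₁) :
    wt (r₁ + r₂) = 12 ∧ ∃ w ∈ code 9, (∀ j, red (w j) = r₁ j + r₂ j) ∧ chi w (r₁ - r₂) ≠ 0 := by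
  obtain ⟨s₁, q₁, hq₁, hr₁⟩ := exists_svec9 h₁
  obtain ⟨s₂, q₂, hq₂, hr₂⟩ := exists_svec9 h₂
  have hk := List.all_eq_true.1 (List.all_eq_true.1 k_pair q₁ hq₁) q₂ hq₂
  rw [Bool.or_eq_true] at hk
  have hk : pairOK s₁ s₂ q₁ q₂ = true := by
    rcases hk with hk | hk
    · exfalso
      have hv : vec q₁ = vec q₂ := by
        funext j
        rw [vec_eq_of_full (L24_spec q₁ hq₁).2.1, vec_eq_of_full (L24_spec q₂ hq₂).2.1,
          Nat.eq_of_beq_eq_true hk]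
      have e : ∀ s q, (fun j => red (svec9 s q j)) = if s then -vec q else vec q := by
        intro s q
        funext j
        cases s
        · exact red_vec9 q j
        · exact (red_neg _).trans (congrArg Neg.neg (red_vec9 q j))
      have e₁ := (funext hr₁).symm.trans (e s₁ q₁)
      have e₂ := (funext hr₂).symm.trans (e s₂ q₂)
      rw [← hv] at e₂
      rw [e₁, e₂] at hne hne'
      cases s₁ <;> cases s₂ <;> simp at hne hne'
    · simp only [Bool.and_eq_true] at hk
      obtain ⟨⟨⟨a, b⟩, c⟩, d⟩ := hk
      cases s₁ <;> cases s₂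
      exacts [a, b, c, d]
  obtain ⟨h1, h2⟩ := pairOK_spec hk h₁ h₂ hr₁ hr₂
  refine ⟨h1, _, Submodule.add_mem _ (svec9_mem s₁ (L24_spec q₁ hq₁).1)
    (svec9_mem s₂ (L24_spec q₂ hq₂).1), fun j => ?_, h2⟩
  rw [Pi.add_apply, red_add, hr₁, hr₂]

lemma wt_add_of_disj {c t : Fin 24 → ZMod 3} (h : Disj c t) : wt (c + t) = wt c + wt t := by
  unfold wt
  rw [← Finset.card_union_of_disjoint]
  · congr 1
    ext j
    simp only [Finset.mem_filter, Finset.mem_union, Finset.mem_univ, true_and, Pi.add_apply]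
    rcases h j with h | h <;> simp [h]
  · rw [Finset.disjoint_filter]
    intro j _ h1 h2
    exact (h j).elim h1 h2

lemma three_mul_eq_zero (a : Fin 24 → ZMod 3) : a + a + a = 0 := by
  funext j
  have key : ∀ a : ZMod 3, a + a + a = 0 := by decide
  exact key _

/-- A disjoint pair of nonzero words filling all coordinates consists of words of weight 12 and
has a nontrivial phase. -/
lemma full_pair {c t : Fin 24 → ZMod 3} (hc : c ∈ code 3) (ht : t ∈ code 3) (hc0 : c ≠ 0)
    (ht0 : t ≠ 0) (h : Disj c t) (h24 : wt c + wt t = 24) : wt c = 12 ∧ chi (lft c) t ≠ 0 := by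
  have h₁ : -(c + t) ∈ W 24 :=
    neg_mem_W (mem_W.2 ⟨Submodule.add_mem _ hc ht, (wt_add_of_disj h).trans h24⟩)
  have h₂ : t - c ∈ W 24 := by
    refine mem_W.2 ⟨Submodule.sub_mem _ ht hc, ?_⟩
    rw [sub_eq_add_neg, wt_add_of_disj (disj_neg.2 h.symm), wt_neg, add_comm, h24]
  have e₁ : -(c + t) + (t - c) = c := by
    have := three_mul_eq_zero c
    linear_combination -this
  have e₂ : -(c + t) - (t - c) = t := by
    have := three_mul_eq_zero t
    linear_combination -this
  obtain ⟨hw, w, hw9, hred, hchi⟩ := exists_pair h₁ h₂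
    (by
      intro h'
      apply ht0
      have := three_mul_eq_zero t
      linear_combination this - h')
    (by
      intro h'
      apply hc0
      have := three_mul_eq_zero c
      linear_combination this + h')
  rw [e₁] at hw
  rw [e₂] at hchi
  refine ⟨hw, ?_⟩
  rwa [chi_lift hw9 (lft_mem c) (fun j => ?_) ht]
  rw [hred, red_lft hc]
  exact congrFun e₁ j

/-! ### The four phase sums -/

/-- The codewords disjoint from `c`. -/
def away (c : Fin 24 → ZMod 3) : AddSubgroup (Fin 24 → ZMod 3) where
  carrier := {t | t ∈ code 3 ∧ Disj c t}
  zero_mem' := ⟨Submodule.zero_mem _, fun _ => Or.inr rfl⟩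
  add_mem' := by
    rintro a b ⟨ha, ha'⟩ ⟨hb, hb'⟩
    refine ⟨Submodule.add_mem _ ha hb, fun j => ?_⟩
    rcases ha' j with h | h
    · exact Or.inl h
    · rcases hb' j with h' | h'
      · exact Or.inl h'
      · exact Or.inr (by simp [h, h'])
  neg_mem' := by
    rintro a ⟨ha, ha'⟩
    exact ⟨Submodule.neg_mem _ ha, disj_neg.2 ha'⟩

/-- The pairing with a fixed word as a homomorphism on the codewords disjoint from `c`. -/
def chiHom (w : Fin 24 → ZMod 9) (c : Fin 24 → ZMod 3) : away c →+ ZMod 3 where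
  toFun t := chi w t.1
  map_zero' := chi_zero_right w
  map_add' := by
    intro a b
    simp [chi, add_mul, Finset.sum_add_distrib]

lemma asum_eq {c : Fin 24 → ZMod 3} (hc : c ∈ code 3) (k : ℕ) :
    asum (lft c) k = ∑ t ∈ W k, if Disj c t then ph c t else 0 := by
  have h : (fun j => red (lft c j)) = c := funext (red_lft hc)
  unfold asum
  rw [h]
  rfl

/-- The phases of a word of weight 9 are nontrivial since those against words of weight 9 sum to
`-4`. Hence all its phases sum to zero. -/
lemma sum_ph_nine {c : Fin 24 → ZMod 3} (hc : c ∈ W 9) :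
    ∑ t ∈ cw, (if Disj c t then ph c t else 0) = 0 := by
  have hc' := (mem_W.1 hc).1
  have h1 : ∑ t ∈ cw, (if Disj c t then ph c t else 0) = ∑ t : away c, psi (chiHom (lft c) c t) := by
    rw [← Finset.sum_filter]
    exact Finset.sum_subtype _ (fun t => by rw [Finset.mem_filter, mem_cw]; exact Iff.rfl) _
  rw [h1, sum_psi_hom, if_neg]
  intro h0
  have h4 := asum_nine hc
  rw [asum_eq hc'] at h4
  have h5 : ∀ t ∈ W 9, (if Disj c t then ph c t else 0) = if Disj c t then (1 : ℂ) else 0 := by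
    intro t ht
    split_ifs with hd
    · have h6 : chi (lft c) t = 0 := DFunLike.congr_fun h0 (⟨t, (mem_W.1 ht).1, hd⟩ : away c)
      rw [ph, h6, psi_zero]
    · rfl
  rw [Finset.sum_congr rfl h5, Finset.sum_boole] at h4
  have h7 : (((W 9).filter (Disj c)).card : ℝ) = -4 := by exact_mod_cast h4
  have h8 : (0 : ℝ) ≤ (((W 9).filter (Disj c)).card : ℝ) := Nat.cast_nonneg _
  linarith

lemma disj_wt_cases {c t : Fin 24 → ZMod 3} (hc : c ∈ code 3) (ht : t ∈ code 3) (hc0 : c ≠ 0)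
    (ht0 : t ≠ 0) (h : Disj c t) :
    wt c = 9 ∧ wt t = 9 ∨ wt c = 9 ∧ wt t = 12 ∨ wt c = 12 ∧ wt t = 9 ∨ wt c = 12 ∧ wt t = 12 := by
  have h1 := nine_le_wt hc hc0
  have h2 := nine_le_wt ht ht0
  have h3 := h.wt_le
  have h4 := three_dvd_wt hc
  have h5 := three_dvd_wt ht
  by_cases h6 : wt c + wt t = 24
  · have h7 := (full_pair hc ht hc0 ht0 h h6).1
    omega
  · omega

lemma asum_twelve {c : Fin 24 → ZMod 3} (hc : c ∈ W 9) : asum (lft c) 12 = 3 := by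
  obtain ⟨hc', hc9⟩ := mem_W.1 hc
  have hc0 : c ≠ 0 := by rintro rfl; rw [wt_eq_zero.2 rfl] at hc9; omega
  have h := sum_ph_nine hc
  have h9 := asum_nine hc
  rw [asum_eq hc'] at h9 ⊢
  have hs : ∀ t ∈ cw, (if Disj c t then ph c t else 0) =
      (if t = 0 then (1 : ℂ) else 0) + (if wt t = 9 then (if Disj c t then ph c t else 0) else 0) +
        (if wt t = 12 then (if Disj c t then ph c t else 0) else 0) := by
    intro t ht
    by_cases ht0 : t = 0
    · subst ht0
      rw [wt_eq_zero.2 rfl, if_pos rfl, if_pos (show Disj c 0 from fun j => Or.inr rfl), ph,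
        chi_zero_right, psi_zero]
      simp
    · by_cases hd : Disj c t
      · rcases disj_wt_cases hc' (mem_cw.1 ht) hc0 ht0 hd with h | h | h | h <;>
          simp [h.2, hd, ht0]
      · simp [hd, ht0]
  rw [Finset.sum_congr rfl hs, Finset.sum_add_distrib, Finset.sum_add_distrib,
    ← Finset.sum_filter (fun t => wt t = 9), ← Finset.sum_filter (fun t => wt t = 12)] at h
  change _ + ∑ t ∈ W 9, _ + ∑ t ∈ W 12, _ = _ at h
  rw [h9, Finset.sum_ite_eq', if_pos (mem_cw.2 (Submodule.zero_mem _))] at h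
  linear_combination h

/-- The sum of the phases of the disjoint pairs of words of weights `p` and `q`. -/
def phSum (p q : ℕ) : ℂ := ∑ c ∈ W p, ∑ t ∈ W q, if Disj c t then ph c t else 0

lemma phSum_nine_nine : phSum 9 9 = -16192 := by
  have h : ∀ c ∈ W 9, (∑ t ∈ W 9, if Disj c t then ph c t else 0) = -4 := fun c hc => by
    rw [← asum_eq (mem_W.1 hc).1, asum_nine hc]
  rw [phSum, Finset.sum_congr rfl h, Finset.sum_const, card_W.2.1]
  norm_num

lemma phSum_nine_twelve : phSum 9 12 = 12144 := by
  have h : ∀ c ∈ W 9, (∑ t ∈ W 12, if Disj c t then ph c t else 0) = 3 := fun c hc => by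
    rw [← asum_eq (mem_W.1 hc).1, asum_twelve hc]
  rw [phSum, Finset.sum_congr rfl h, Finset.sum_const, card_W.2.1]
  norm_num

/-- Self-duality modulo 9 makes the pairing of disjoint words alternating. -/
lemma chi_antisymm {a e : Fin 24 → ZMod 3} (ha : a ∈ code 3) (he : e ∈ code 3) (h : Disj a e) :
    chi (lft a) e = -chi (lft e) a := by
  have h0 := orth9 (lft_mem a) (lft_mem e)
  have key : ∀ v w : ZMod 9, red v = 0 ∨ red w = 0 →
      v * w = tri (red w * dig v + red v * dig w) := by decide
  have hg : ∀ j : ℕ, red (gramN j : ZMod 9) = 1 := by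
    intro j
    rw [red_natCast]
    unfold gramN
    cases Nat.beq j 23 <;> rfl
  have h1 : ∀ j : Fin 24, (gramN (Fin.val j) : ZMod 9) * (lft a j * lft e j) =
      tri (e j * dig (lft a j) + a j * dig (lft e j)) := by
    intro j
    rw [key (lft a j) (lft e j) (by rw [red_lft ha, red_lft he]; exact h j), mul_tri, hg, one_mul,
      red_lft ha,
      red_lft he]
  simp only [h1] at h0
  rw [← tri_sum, tri_eq_zero, Finset.sum_add_distrib] at h0
  exact eq_neg_of_add_eq_zero_left h0

lemma ph_neg_right (c t : Fin 24 → ZMod 3) : ph c (-t) = psi (-chi (lft c) t) := by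
  rw [ph, chi_neg_right]

lemma phSum_twelve_nine : phSum 12 9 = 12144 := by
  rw [← phSum_nine_twelve, phSum, phSum, Finset.sum_comm]
  refine Finset.sum_congr rfl fun c hc => ?_
  rw [← sum_W_neg 12]
  refine Finset.sum_congr rfl fun t ht => ?_
  have hc := (mem_W.1 hc).1
  have ht := (mem_W.1 ht).1
  rw [neg_disj, disj_comm]
  split_ifs with hd
  · rw [ph, chi_antisymm (Submodule.neg_mem _ ht) hc (neg_disj.2 hd.symm), chi_neg_right, neg_neg,
      ph]
  · rfl

/-- Disjoint pairs of words of weight 12 correspond to pairs of words of weight 24 which are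
distinct up to sign. -/
lemma card_pairs : ((W 12 ×ˢ W 12).filter fun p => Disj p.1 p.2).card = 2208 := by
  have h1 : ((W 24 ×ˢ W 24).filter fun p => p.2 ≠ p.1 ∧ p.2 ≠ -p.1).card = 2208 := by
    have h : ∀ r ∈ W 24, ((W 24).filter fun s => s ≠ r ∧ s ≠ -r).card = 46 := by
      intro r hr
      have hr0 : r ≠ 0 := by
        rintro rfl
        have := (mem_W.1 hr).2
        rw [wt_eq_zero.2 rfl] at this; omega
      have : (W 24).filter (fun s => s ≠ r ∧ s ≠ -r) = ((W 24).erase r).erase (-r) := by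
        ext s
        simp only [Finset.mem_filter, Finset.mem_erase]
        tauto
      rw [this, Finset.card_erase_of_mem, Finset.card_erase_of_mem hr, card_W.2.2]
      exact Finset.mem_erase.2 ⟨(neg_ne_self hr0).symm, neg_mem_W hr⟩
    rw [Finset.card_filter, Finset.sum_product]
    simp only [← Finset.card_filter]
    rw [Finset.sum_congr rfl h, Finset.sum_const, card_W.2.2]
    norm_num
  rw [← h1]
  have e₁ : ∀ c t : Fin 24 → ZMod 3, -(c + t) + (t - c) = c := by
    intro c t
    have := three_mul_eq_zero c
    linear_combination -this
  have e₂ : ∀ c t : Fin 24 → ZMod 3, -(c + t) - (t - c) = t := by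
    intro c t
    have := three_mul_eq_zero t
    linear_combination -this
  have e₃ : ∀ r s : Fin 24 → ZMod 3, -(r + s + (r - s)) = r := by
    intro r s
    have := three_mul_eq_zero r
    linear_combination -this
  have e₄ : ∀ r s : Fin 24 → ZMod 3, r - s - (r + s) = s := by
    intro r s
    have := three_mul_eq_zero s
    linear_combination -this
  refine Finset.card_bij' (fun p _ => (-(p.1 + p.2), p.2 - p.1)) (fun p _ => (p.1 + p.2, p.1 - p.2))
    ?_ ?_ ?_ ?_
  · rintro ⟨c, t⟩ h
    simp only [Finset.mem_filter, Finset.mem_product] at h ⊢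
    obtain ⟨⟨hc, ht⟩, hd⟩ := h
    obtain ⟨hc, hc12⟩ := mem_W.1 hc
    obtain ⟨ht, ht12⟩ := mem_W.1 ht
    refine ⟨⟨neg_mem_W (mem_W.2 ⟨Submodule.add_mem _ hc ht, ?_⟩),
      mem_W.2 ⟨Submodule.sub_mem _ ht hc, ?_⟩⟩, ?_, ?_⟩
    · rw [wt_add_of_disj hd, hc12, ht12]
    · rw [sub_eq_add_neg, wt_add_of_disj (disj_neg.2 hd.symm), wt_neg, hc12, ht12]
    · intro h'
      have h0 : t = 0 := by
        have := three_mul_eq_zero t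
        linear_combination this - h'
      rw [wt_eq_zero.2 h0] at ht12; omega
    · intro h'
      have h0 : c = 0 := by
        have := three_mul_eq_zero c
        linear_combination this + h'
      rw [wt_eq_zero.2 h0] at hc12; omega
  · rintro ⟨r, s⟩ h
    simp only [Finset.mem_filter, Finset.mem_product] at h ⊢
    obtain ⟨⟨hr, hs⟩, hne, hne'⟩ := h
    obtain ⟨hw, -⟩ := exists_pair hr hs hne hne'
    obtain ⟨hr, hr24⟩ := mem_W.1 hr
    obtain ⟨hs, hs24⟩ := mem_W.1 hs
    have hd : Disj (r + s) (r - s) := by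
      intro j
      have key : ∀ a b : ZMod 3, a ≠ 0 → b ≠ 0 → a + b = 0 ∨ a - b = 0 := by decide
      exact key _ _ (ne_zero_of_wt24 hr24 j) (ne_zero_of_wt24 hs24 j)
    have h24 := wt_add_of_disj hd
    have h25 : wt (r + s + (r - s)) = 24 := by rw [← wt_neg, e₃, hr24]
    refine ⟨⟨mem_W.2 ⟨Submodule.add_mem _ hr hs, hw⟩, mem_W.2 ⟨Submodule.sub_mem _ hr hs, ?_⟩⟩, hd⟩
    omega
  · rintro ⟨c, t⟩ _
    exact Prod.ext (e₁ c t) (e₂ c t)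
  · rintro ⟨r, s⟩ _
    exact Prod.ext (e₃ r s) (e₄ r s)

lemma phSum_twelve_twelve : phSum 12 12 = -1104 := by
  have h2 : phSum 12 12 + phSum 12 12 = -2208 := by
    have hneg : phSum 12 12 = ∑ c ∈ W 12, ∑ t ∈ W 12, if Disj c t then ph c (-t) else 0 := by
      refine Finset.sum_congr rfl fun c _ => ?_
      rw [← sum_W_neg 12]
      simp only [disj_neg]
    have hterm : ∀ c ∈ W 12, ∀ t ∈ W 12, (if Disj c t then ph c t else 0) +
        (if Disj c t then ph c (-t) else 0) = -(if Disj c t then (1 : ℂ) else 0) := by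
      intro c hc t ht
      obtain ⟨hc, hc12⟩ := mem_W.1 hc
      obtain ⟨ht, ht12⟩ := mem_W.1 ht
      split_ifs with hd
      · rw [ph_neg_right, ph, psi_add_neg]
        refine (full_pair hc ht ?_ ?_ hd (by omega)).2
        · rintro rfl; rw [wt_eq_zero.2 rfl] at hc12; omega
        · rintro rfl; rw [wt_eq_zero.2 rfl] at ht12; omega
      · simp
    nth_rewrite 2 [hneg]
    rw [phSum, ← Finset.sum_add_distrib]
    simp only [← Finset.sum_add_distrib]
    rw [Finset.sum_congr rfl fun c hc => Finset.sum_congr rfl fun t ht => hterm c hc t ht]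
    simp only [Finset.sum_neg_distrib]
    rw [← Finset.sum_product', Finset.sum_boole, card_pairs]
    norm_num
  linear_combination h2 / 2

/-! ### The mixed part of the weight enumerator -/

lemma prod_loc {R : Type*} [CommRing R] (x y z : R) (c s : Fin 24 → ZMod 3) :
    ∏ j, loc x y z (c j) (s j) =
      if Disj c s then x ^ wt c * y ^ wt s * z ^ (24 - wt c - wt s) else 0 := by
  split_ifs with h
  · have h1 : ∀ j, loc x y z (c j) (s j) =
        (if c j ≠ 0 then x else 1) * (if s j ≠ 0 then y else 1) *
          (if (c + s) j = 0 then z else 1) := by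
      intro j
      rcases h j with h | h
      · by_cases h' : s j = 0 <;> simp [loc, h, h']
      · by_cases h' : c j = 0 <;> simp [loc, h, h']
    simp only [h1]
    rw [Finset.prod_mul_distrib, Finset.prod_mul_distrib, prod_ite_wt, wt_add_of_disj h, one_pow,
      mul_one, Finset.prod_ite, Finset.prod_ite, Finset.prod_const_one, Finset.prod_const_one,
      Finset.prod_const, Finset.prod_const, mul_one, mul_one, Nat.sub_sub]
    rfl
  · unfold Disj at h
    push Not at h
    obtain ⟨j, hc, hs⟩ := h
    exact Finset.prod_eq_zero (Finset.mem_univ j) (by simp [loc, hc, hs])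

/-- The monomial `x^a y^b z^e`. -/
def mon (a b e : ℕ) : MvPolynomial (Fin 3) ℂ := X 0 ^ a * X 1 ^ b * X 2 ^ e

lemma coeff_mon (a b e : ℕ) (d : Fin 3 →₀ ℕ) :
    coeff d (mon a b e) = if d 0 = a ∧ d 1 = b ∧ d 2 = e then 1 else 0 := by
  have h : mon a b e =
      monomial (Finsupp.single 0 a + Finsupp.single 1 b + Finsupp.single 2 e) 1 := by
    simp only [mon, X_pow_eq_monomial, monomial_mul, mul_one]
  rw [h, coeff_monomial]
  refine if_congr ?_ rfl rfl
  rw [DFunLike.ext_iff, Fin.forall_fin_succ, Fin.forall_fin_succ, Fin.forall_fin_succ]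
  simp [Finsupp.single_apply, eq_comm]

/-- The sum of the terms of the transformed enumerator. -/
def total : MvPolynomial (Fin 3) ℂ :=
  ∑ c ∈ cw, ∑ s ∈ cw, ph c s • ∏ j, loc (X 0) (X 1) (X 2) (c j) (s j)

/-- The mixed part of the transformed enumerator. -/
def mixed : MvPolynomial (Fin 3) ℂ :=
  (-16192 : ℂ) • mon 9 9 6 + (12144 : ℂ) • mon 9 12 3 + (12144 : ℂ) • mon 12 9 3 +
    (-1104 : ℂ) • mon 12 12 0

lemma sum_phSum (p q : ℕ) (M : MvPolynomial (Fin 3) ℂ) :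
    ∑ c ∈ cw, ∑ s ∈ cw, (if wt c = p ∧ wt s = q then (if Disj c s then ph c s else 0) • M else 0) =
      phSum p q • M := by
  rw [phSum, Finset.sum_smul, W, Finset.sum_filter]
  refine Finset.sum_congr rfl fun c _ => ?_
  split_ifs with h
  · rw [Finset.sum_smul, W, Finset.sum_filter]
    refine Finset.sum_congr rfl fun s _ => ?_
    simp [h]
  · simp [h]

lemma total_eq : total = mixed +
    ∑ c ∈ cw, ∑ s ∈ cw, if c = 0 ∨ s = 0 then
      ph c s • ∏ j, loc (X 0) (X 1) (X 2) (c j) (s j) else (0 : MvPolynomial (Fin 3) ℂ) := by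
  have h₁ := sum_phSum 9 9 (mon 9 9 6)
  have h₂ := sum_phSum 9 12 (mon 9 12 3)
  have h₃ := sum_phSum 12 9 (mon 12 9 3)
  have h₄ := sum_phSum 12 12 (mon 12 12 0)
  rw [phSum_nine_nine] at h₁
  rw [phSum_nine_twelve] at h₂
  rw [phSum_twelve_nine] at h₃
  rw [phSum_twelve_twelve] at h₄
  rw [mixed, ← h₁, ← h₂, ← h₃, ← h₄, total]
  simp only [← Finset.sum_add_distrib]
  refine Finset.sum_congr rfl fun c hc => Finset.sum_congr rfl fun s hs => ?_
  by_cases h0 : c = 0 ∨ s = 0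
  · have hw : wt c = 0 ∨ wt s = 0 := by rwa [wt_eq_zero, wt_eq_zero]
    rw [if_pos h0, if_neg (by omega), if_neg (by omega), if_neg (by omega), if_neg (by omega)]
    simp only [zero_add]
  · rw [if_neg h0, add_zero, prod_loc]
    rw [not_or] at h0
    by_cases hd : Disj c s
    · simp only [if_pos hd]
      rcases disj_wt_cases (mem_cw.1 hc) (mem_cw.1 hs) h0.1 h0.2 hd with h | h | h | h <;>
        simp [h.1, h.2, mon]
    · simp [hd]

lemma coeff_total {d : Fin 3 →₀ ℕ} (h0 : d 0 ≠ 0) (h1 : d 1 ≠ 0) :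
    coeff d total = coeff d mixed := by
  rw [total_eq, coeff_add, add_eq_left, coeff_sum]
  refine Finset.sum_eq_zero fun c _ => ?_
  rw [coeff_sum]
  refine Finset.sum_eq_zero fun s _ => ?_
  split_ifs with h
  · rw [coeff_smul, prod_loc]
    split_ifs with hd
    · have hm := coeff_mon (wt c) (wt s) (24 - wt c - wt s) d
      rw [mon, if_neg] at hm
      · rw [hm, smul_zero]
      · rintro ⟨e0, e1, -⟩
        rcases h with rfl | rfl
        · exact h0 (e0.trans (wt_eq_zero.2 rfl))
        · exact h1 (e1.trans (wt_eq_zero.2 rfl))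
    · simp
  · simp

lemma coeff_mixed {d : Fin 3 →₀ ℕ} (h : ¬ (d 0 ≠ 0 ∧ d 1 ≠ 0)) : coeff d mixed = 0 := by
  have key : ∀ a b e, a ≠ 0 → b ≠ 0 → coeff d (mon a b e) = 0 := by
    intro a b e ha hb
    rw [coeff_mon, if_neg]
    rintro ⟨rfl, rfl, -⟩
    exact h ⟨ha, hb⟩
  simp [mixed, coeff_smul, key]

lemma coeff_divPart {σ : Type*} (A : MvPolynomial σ ℚ) (i j : σ) (d : σ →₀ ℕ) :
    coeff d (divPart A i j) = if d i ≠ 0 ∧ d j ≠ 0 then coeff d A else 0 := by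
  rw [divPart, coeff_sum]
  simp only [coeff_monomial]
  rw [Finset.sum_ite_eq']
  by_cases h : coeff d A = 0 <;> simp [h]

/-! ### The symmetrized weight enumerator as a sum of products -/

lemma val_cases : ∀ v : ZMod 9, v ≠ 0 → (padicValNat 3 v.val = 0 ↔ red v ≠ 0) ∧
    (padicValNat 3 v.val = 1 ↔ red v = 0) := by
  decide +kernel

lemma aeval_swe (C : Submodule (ZMod 9) (Fin 24 → ZMod 9)) :
    aeval (![X 0, X 2 - X 1, X 2 + 2 * X 1] : Fin 3 → MvPolynomial (Fin 3) ℚ) (swe 3 2 C) =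
      ∑ c : Fin 24 → ZMod 9, if c ∈ C then
        ∏ j, phi (X 0 : MvPolynomial (Fin 3) ℚ) (X 1) (X 2) (c j) else 0 := by
  rw [swe, map_sum]
  refine Finset.sum_congr rfl fun c _ => ?_
  split_ifs with hc
  · have h0 : (Finset.univ.filter fun j => c j ≠ 0 ∧ padicValNat 3 (c j).val = ((0 : Fin 2) : ℕ)) =
        (Finset.univ.filter fun j => ¬ c j = 0).filter fun j => ¬ red (c j) = 0 := by
      rw [Finset.filter_filter]
      refine Finset.filter_congr fun j _ => and_congr_right fun h => ?_
      exact (val_cases _ h).1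
    have h1 : (Finset.univ.filter fun j => c j ≠ 0 ∧ padicValNat 3 (c j).val = ((1 : Fin 2) : ℕ)) =
        (Finset.univ.filter fun j => ¬ c j = 0).filter fun j => red (c j) = 0 := by
      rw [Finset.filter_filter]
      refine Finset.filter_congr fun j _ => and_congr_right fun h => ?_
      exact (val_cases _ h).2
    simp only [phi]
    rw [Finset.prod_ite, Finset.prod_ite, Finset.prod_const, Finset.prod_const, Finset.prod_const,
      Fin.prod_univ_two, h0, h1]
    have e0 : Fin.castSucc (0 : Fin 2) = 0 := rfl
    have e1 : Fin.castSucc (1 : Fin 2) = 1 := rfl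
    have e2 : Fin.last 2 = 2 := rfl
    rw [e0, e1, e2]
    simp only [map_mul, map_pow, aeval_X, Matrix.cons_val]
    ring
  · simp

/-- The claim for a code which agrees with `code 9` up to a permutation of coordinates. -/
lemma divPart_eq (C : Submodule (ZMod 9) (Fin 24 → ZMod 9)) (σ : Equiv.Perm (Fin 24))
    (hσ : ∀ c : Fin 24 → ZMod 9, c ∈ C ↔ (fun j => c (σ j)) ∈ code 9) :
    divPart (((3:ℚ) ^ 12)⁻¹ •
        aeval (![X 0, X 2 - X 1, X 2 + 2 * X 1] : Fin 3 → MvPolynomial (Fin 3) ℚ) (swe 3 2 C))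
      0 1 =
      -(16192 * X 2 ^ 6 * X 0 ^ 9 * X 1 ^ 9) + 12144 * X 2 ^ 3 * X 0 ^ 9 * X 1 ^ 12
        + 12144 * X 2 ^ 3 * X 0 ^ 12 * X 1 ^ 9 - 1104 * X 0 ^ 12 * X 1 ^ 12 := by
  have hA : ∑ c : Fin 24 → ZMod 9, (if c ∈ C then
      ∏ j, phi (X 0 : MvPolynomial (Fin 3) ℚ) (X 1) (X 2) (c j) else 0) =
      ∑ w ∈ cw9, ∏ j, phi (X 0 : MvPolynomial (Fin 3) ℚ) (X 1) (X 2) (w j) := by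
    rw [cw9, Finset.sum_filter]
    refine Fintype.sum_equiv (Equiv.arrowCongr σ.symm (Equiv.refl (ZMod 9))) _ _ fun c => ?_
    have e : Equiv.arrowCongr σ.symm (Equiv.refl (ZMod 9)) c = fun j => c (σ j) := rfl
    rw [e]
    refine if_congr (hσ c) ?_ rfl
    exact (Equiv.prod_comp σ fun j => phi (X 0 : MvPolynomial (Fin 3) ℚ) (X 1) (X 2) (c j)).symm
  have hphi : ∀ v : ZMod 9, map (algebraMap ℚ ℂ) (phi (X 0 : MvPolynomial (Fin 3) ℚ) (X 1) (X 2) v) =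
      phi (X 0) (X 1) (X 2) v := by
    intro v
    unfold phi
    split_ifs <;> simp
  have hT : map (algebraMap ℚ ℂ) (((3:ℚ) ^ 12)⁻¹ •
      aeval (![X 0, X 2 - X 1, X 2 + 2 * X 1] : Fin 3 → MvPolynomial (Fin 3) ℚ) (swe 3 2 C)) =
      total := by
    rw [aeval_swe, hA, smul_eq_C_mul, map_mul, map_C, map_sum]
    simp only [map_prod, hphi]
    rw [sum_phi, ← total, ← smul_eq_C_mul, smul_smul]
    norm_num
  have hR : map (algebraMap ℚ ℂ) (-(16192 * X 2 ^ 6 * X 0 ^ 9 * X 1 ^ 9) +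
      12144 * X 2 ^ 3 * X 0 ^ 9 * X 1 ^ 12 + 12144 * X 2 ^ 3 * X 0 ^ 12 * X 1 ^ 9 -
        1104 * X 0 ^ 12 * X 1 ^ 12 : MvPolynomial (Fin 3) ℚ) = mixed := by
    simp only [mixed, mon, smul_eq_C_mul, map_add, map_sub, map_neg, map_mul, map_pow, map_X,
      map_ofNat]
    ring
  ext d
  rw [coeff_divPart]
  apply (algebraMap ℚ ℂ).injective
  rw [← coeff_map _ (_ - _), hR]
  split_ifs with h
  · rw [← coeff_map, hT, coeff_total h.1 h.2]
  · rw [coeff_mixed h, map_zero]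

/-! ### The generator polynomials -/

instance : Nontrivial (ZMod 9) := ⟨0, 1, by decide⟩

/-- The coefficients of the reciprocal of the generator polynomial, up to sign. -/
def gcoR (k : ℕ) : ℕ := [8, 3, 6, 4, 0, 4, 0, 2, 5, 1, 4, 1].getD k 0

/-- The polynomial modulo 9 of degree at most 11 with coefficients `a`. -/
def poly (a : ℕ → ℕ) : Polynomial (ZMod 9) :=
  ∑ k : Fin 12, Polynomial.C (a k : ZMod 9) * Polynomial.X ^ (k : ℕ)

lemma coeff_poly (a : ℕ → ℕ) (i : ℕ) :
    (poly a).coeff i = if i < 12 then (a i : ZMod 9) else 0 := by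
  rw [poly, Fin.sum_univ_eq_sum_range (fun k => Polynomial.C (a k : ZMod 9) * Polynomial.X ^ k),
    Polynomial.finsetSum_coeff]
  simp only [Polynomial.coeff_C_mul_X_pow]
  rw [Finset.sum_ite_eq]
  simp

lemma natDegree_poly {a : ℕ → ℕ} (ha : a 11 = 1) : (poly a).natDegree = 11 := by
  refine Polynomial.natDegree_eq_of_le_of_coeff_ne_zero ?_ ?_
  · rw [Polynomial.natDegree_le_iff_coeff_eq_zero]
    intro i hi
    rw [coeff_poly, if_neg (by omega)]
  · rw [coeff_poly, if_pos (by norm_num), ha]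
    decide

lemma monic_poly {a : ℕ → ℕ} (ha : a 11 = 1) : (poly a).Monic := by
  rw [Polynomial.Monic, Polynomial.leadingCoeff, natDegree_poly ha, coeff_poly,
    if_pos (by norm_num), ha, Nat.cast_one]

lemma factor_identity {R : Type*} [CommRing R] (h9 : (9 : R) = 0) (t : R) :
    (t - 1) * (8 + 5 * t ^ 1 + 8 * t ^ 2 + 4 * t ^ 3 + 7 * t ^ 4 + 0 * t ^ 5 + 5 * t ^ 6 +
      0 * t ^ 7 + 5 * t ^ 8 + 3 * t ^ 9 + 6 * t ^ 10 + 1 * t ^ 11) *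
      (8 + 3 * t ^ 1 + 6 * t ^ 2 + 4 * t ^ 3 + 0 * t ^ 4 + 4 * t ^ 5 + 0 * t ^ 6 + 2 * t ^ 7 +
        5 * t ^ 8 + 1 * t ^ 9 + 4 * t ^ 10 + 1 * t ^ 11) = t ^ 23 - 1 := by
  linear_combination (-7 - 7 * t ^ 2 + t ^ 3 - 2 * t ^ 4 + 3 * t ^ 5 - t ^ 6 + 3 * t ^ 7 -
    5 * t ^ 8 - 4 * t ^ 10 + 2 * t ^ 11 + 3 * t ^ 12 + 4 * t ^ 13 + 2 * t ^ 14 + 3 * t ^ 15 -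
    t ^ 16 + 2 * t ^ 17 - 2 * t ^ 18 + 3 * t ^ 19 + 2 * t ^ 21 + t ^ 22) * h9

lemma poly_eq_range (a : ℕ → ℕ) :
    poly a = ∑ k ∈ Finset.range 12, (a k : Polynomial (ZMod 9)) * Polynomial.X ^ k := by
  rw [poly, Fin.sum_univ_eq_sum_range (fun k => Polynomial.C (a k : ZMod 9) * Polynomial.X ^ k)]
  simp only [map_natCast]

lemma poly_mul : (Polynomial.X - 1) * poly gco * poly gcoR =
    (Polynomial.X ^ 23 - 1 : Polynomial (ZMod 9)) := by
  have h9 : (9 : Polynomial (ZMod 9)) = 0 := by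
    have : (9 : Polynomial (ZMod 9)) = Polynomial.C 9 := rfl
    rw [this, show (9 : ZMod 9) = 0 from rfl, map_zero]
  rw [← factor_identity h9 Polynomial.X, poly_eq_range, poly_eq_range]
  simp only [Finset.sum_range_succ, Finset.sum_range_zero, zero_add, pow_zero, mul_one,
    show gco 0 = 8 from rfl, show gco 1 = 5 from rfl, show gco 2 = 8 from rfl,
    show gco 3 = 4 from rfl, show gco 4 = 7 from rfl, show gco 5 = 0 from rfl,
    show gco 6 = 5 from rfl, show gco 7 = 0 from rfl, show gco 8 = 5 from rfl,
    show gco 9 = 3 from rfl, show gco 10 = 6 from rfl, show gco 11 = 1 from rfl,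
    show gcoR 0 = 8 from rfl, show gcoR 1 = 3 from rfl, show gcoR 2 = 6 from rfl,
    show gcoR 3 = 4 from rfl, show gcoR 4 = 0 from rfl, show gcoR 5 = 4 from rfl,
    show gcoR 6 = 0 from rfl, show gcoR 7 = 2 from rfl, show gcoR 8 = 5 from rfl,
    show gcoR 9 = 1 from rfl, show gcoR 10 = 4 from rfl, show gcoR 11 = 1 from rfl,
    Nat.cast_ofNat, Nat.cast_zero, Nat.cast_one]

/-- Uniqueness of the Hensel lift: coprimality of `A` and `H`, which comes from the separability
of `x^23 - 1`, is inherited by any polynomial congruent to `A` modulo 3. -/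
lemma hensel_unique {A H f : Polynomial (ZMod 9)} (hA : A.Monic) (hf : f.Monic)
    (hdeg : A.natDegree = f.natDegree) (hAH : A * H = Polynomial.X ^ 23 - 1)
    (hdvd : f ∣ Polynomial.X ^ 23 - 1)
    (hmap : f.map (ZMod.castHom (by norm_num : 3 ∣ 9) (ZMod 3)) =
      A.map (ZMod.castHom (by norm_num : 3 ∣ 9) (ZMod 3))) : f = A := by
  have h9 : (9 : Polynomial (ZMod 9)) = 0 := by
    have : (9 : Polynomial (ZMod 9)) = Polynomial.C 9 := rfl
    rw [this, show (9 : ZMod 9) = 0 from rfl, map_zero]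
  have hd := congrArg Polynomial.derivative hAH
  rw [Polynomial.derivative_mul, Polynomial.derivative_sub, Polynomial.derivative_X_pow,
    Polynomial.derivative_one, sub_zero] at hd
  have h23 : Polynomial.C ((23 : ℕ) : ZMod 9) = (23 : Polynomial (ZMod 9)) := map_natCast _ 23
  rw [h23] at hd
  norm_num at hd
  obtain ⟨u, v, huv⟩ : ∃ u v, u * A + v * H = 1 := by
    refine ⟨2 * (Polynomial.X * Polynomial.derivative H - 23 * H),
      2 * (Polynomial.X * Polynomial.derivative A), ?_⟩
    linear_combination 2 * Polynomial.X * hd - 46 * hAH + 5 * h9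
  obtain ⟨a, ha⟩ : Polynomial.C 3 ∣ f - A := by
    rw [Polynomial.C_dvd_iff_dvd_coeff]
    intro i
    have h1 := congrArg (fun p => Polynomial.coeff p i) hmap
    simp only [Polynomial.coeff_map] at h1
    rw [← sub_eq_zero, ← map_sub, ← Polynomial.coeff_sub] at h1
    have key : ∀ x : ZMod 9, red x = 0 → 3 ∣ x := by
      intro x hx
      exact ⟨((x.val / 3 : ℕ) : ZMod 9), by revert x; decide⟩
    exact key _ h1
  have h3 : Polynomial.C (3 : ZMod 9) = (3 : Polynomial (ZMod 9)) := rfl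
  rw [h3] at ha
  have hco : IsCoprime f H := by
    refine ⟨(1 - 3 * u * a) * u, (1 - 3 * u * a) * v, ?_⟩
    linear_combination (1 - 3 * u * a) * huv + (1 - 3 * u * a) * u * ha - (u * a) ^ 2 * h9
  have : f ∣ A := hco.dvd_of_dvd_mul_right (hAH ▸ hdvd)
  exact (Polynomial.eq_of_monic_of_dvd_of_natDegree_le hf hA this hdeg.le).symm

lemma map_poly_monic {a : ℕ → ℕ} (ha : a 11 = 1) :
    ((poly a).map (ZMod.castHom (by norm_num : 3 ∣ 9) (ZMod 3))).Monic ∧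
      ((poly a).map (ZMod.castHom (by norm_num : 3 ∣ 9) (ZMod 3))).natDegree = 11 :=
  ⟨(monic_poly ha).map _, by rw [(monic_poly ha).natDegree_map, natDegree_poly ha]⟩

/-- The generator polynomial is one of the two explicit factors of `x^23 - 1`. -/
lemma lift_eq {g : Polynomial (ZMod 3)} (hg : IsQRFactor 3 g) {f : Polynomial (ZMod 9)}
    (hf : f.Monic) (hdeg : f.natDegree = 11) (hdvd : f ∣ Polynomial.X ^ 23 - 1)
    (hmap : f.map (ZMod.castHom (by norm_num : 3 ∣ 9) (ZMod 3)) = g) :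
    f = poly gco ∨ f = poly gcoR := by
  obtain ⟨hm, hd, hirr, hdv⟩ := hg
  have : Fact (Nat.Prime 3) := ⟨Nat.prime_three⟩
  have hp := hirr.prime
  have hfac := congrArg (Polynomial.map (ZMod.castHom (by norm_num : 3 ∣ 9) (ZMod 3))) poly_mul
  simp only [Polynomial.map_mul, Polynomial.map_sub, Polynomial.map_X, Polynomial.map_one,
    Polynomial.map_pow] at hfac
  rw [← hfac] at hdv
  have h1 := map_poly_monic (a := gco) rfl
  have h2 := map_poly_monic (a := gcoR) rfl
  rcases hp.dvd_or_dvd hdv with h | h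
  · rcases hp.dvd_or_dvd h with h | h
    · exfalso
      have hX : (Polynomial.X - 1 : Polynomial (ZMod 3)) = Polynomial.X - Polynomial.C 1 := by simp
      rw [hX] at h
      have := Polynomial.natDegree_le_of_dvd h (Polynomial.X_sub_C_ne_zero _)
      rw [Polynomial.natDegree_X_sub_C, hd] at this
      omega
    · left
      have e := Polynomial.eq_of_monic_of_dvd_of_natDegree_le hm h1.1 h (by omega)
      refine hensel_unique (H := (Polynomial.X - 1) * poly gcoR) (monic_poly rfl) hf
        (by rw [natDegree_poly rfl, hdeg]) ?_ hdvd (hmap.trans e.symm)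
      rw [← poly_mul]; ring
  · right
    have e := Polynomial.eq_of_monic_of_dvd_of_natDegree_le hm h2.1 h (by omega)
    refine hensel_unique (H := (Polynomial.X - 1) * poly gco) (monic_poly rfl) hf
      (by rw [natDegree_poly rfl, hdeg]) ?_ hdvd (hmap.trans e.symm)
    rw [← poly_mul]; ring

/-! ### Cyclic codes and the generator matrix -/

lemma monic_cyclic : (Polynomial.X ^ 23 - 1 : Polynomial (ZMod 9)).Monic :=
  Polynomial.monic_X_pow_sub_C 1 (by norm_num)

lemma degree_cyclic : (Polynomial.X ^ 23 - 1 : Polynomial (ZMod 9)).degree = 23 :=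
  Polynomial.degree_X_pow_sub_C (by norm_num) 1

lemma coeff_sum_mul (A : Polynomial (ZMod 9)) (l : Fin 12 → ZMod 9) (j : ℕ) :
    ((∑ k : Fin 12, Polynomial.C (l k) * Polynomial.X ^ (k : ℕ)) * A).coeff j =
      ∑ k : Fin 12, l k * if (k : ℕ) ≤ j then A.coeff (j - k) else 0 := by
  rw [Finset.sum_mul, Polynomial.finsetSum_coeff]
  refine Finset.sum_congr rfl fun k _ => ?_
  rw [mul_assoc, Polynomial.coeff_C_mul, Polynomial.coeff_X_pow_mul']

/-- A cyclic code of length 23 with monic generator `A` of degree 11 is spanned by the first 12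
shifts of `A`. -/
lemma cyclic_iff {A H : Polynomial (ZMod 9)} (hA : A.Monic) (hdeg : A.natDegree = 11)
    (hAH : A * H = Polynomial.X ^ 23 - 1) (c : Fin 23 → ZMod 9) :
    (∃ f : Polynomial (ZMod 9), ∀ j : Fin 23,
      c j = ((f * A) %ₘ (Polynomial.X ^ 23 - 1)).coeff (j : ℕ)) ↔
      ∃ l : Fin 12 → ZMod 9, ∀ j : Fin 23,
        c j = ∑ k : Fin 12, l k * if (k : ℕ) ≤ j then A.coeff (j - k) else 0 := by
  have hAd : A.degree = 11 := by
    rw [Polynomial.degree_eq_natDegree hA.ne_zero, hdeg]; rfl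
  have hH : H.Monic := hA.of_mul_monic_left (hAH ▸ monic_cyclic)
  have hHd : H.natDegree = 12 := by
    have h1 := hA.natDegree_mul hH
    have h2 : (Polynomial.X ^ 23 - 1 : Polynomial (ZMod 9)).natDegree = 23 :=
      Polynomial.natDegree_X_pow_sub_C (n := 23) (r := 1)
    rw [hAH, h2, hdeg] at h1
    omega
  have hlt : ∀ r : Polynomial (ZMod 9), r.degree < 12 →
      (r * A).degree < (Polynomial.X ^ 23 - 1 : Polynomial (ZMod 9)).degree := by
    intro r hr
    rw [degree_cyclic]
    refine (Polynomial.degree_mul_le _ _).trans_lt ?_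
    rw [hAd]
    rcases eq_or_ne r 0 with rfl | h0
    · rw [Polynomial.degree_zero, WithBot.bot_add]
      exact WithBot.bot_lt_coe _
    · rw [Polynomial.degree_eq_natDegree h0] at hr ⊢
      have hr' : r.natDegree < 12 := by exact_mod_cast hr
      have : r.natDegree + 11 < 23 := by omega
      exact_mod_cast this
  constructor
  · rintro ⟨f, hf⟩
    have hr : (f %ₘ H).degree < 12 := by
      have := Polynomial.degree_modByMonic_lt f hH
      rwa [Polynomial.degree_eq_natDegree hH.ne_zero, hHd] at this
    have hmod : (f * A) %ₘ (Polynomial.X ^ 23 - 1) = (f %ₘ H) * A := by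
      refine (Polynomial.div_modByMonic_unique (f /ₘ H) _ monic_cyclic ⟨?_, hlt _ hr⟩).2
      have := Polynomial.modByMonic_add_div f H
      rw [← hAH]
      linear_combination A * this
    refine ⟨fun k => (f %ₘ H).coeff k, fun j => ?_⟩
    rw [hf, hmod, ← coeff_sum_mul]
    congr 2
    rw [Fin.sum_univ_eq_sum_range
      (fun k => Polynomial.C ((f %ₘ H).coeff k) * Polynomial.X ^ k)]
    refine Polynomial.as_sum_range_C_mul_X_pow' _ ?_
    rcases eq_or_ne (f %ₘ H) 0 with h0 | h0
    · rw [h0]; simp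
    · rw [Polynomial.degree_eq_natDegree h0] at hr
      exact_mod_cast hr
  · rintro ⟨l, hl⟩
    refine ⟨∑ k : Fin 12, Polynomial.C (l k) * Polynomial.X ^ (k : ℕ), fun j => ?_⟩
    rw [hl, (Polynomial.modByMonic_eq_self_iff monic_cyclic).2, coeff_sum_mul]
    apply hlt
    refine (Polynomial.degree_sum_le _ _).trans_lt ?_
    rw [Finset.sup_lt_iff (WithBot.bot_lt_coe _)]
    intro k _
    refine (Polynomial.degree_C_mul_X_pow_le _ _).trans_lt ?_
    exact_mod_cast k.2

lemma colsum : ∀ k : Fin 12, ∑ j : Fin 24, (genN k (Fin.val j) : ZMod 9) = 0 := by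
  decide +kernel

lemma lifted_iff {A H : Polynomial (ZMod 9)} (hA : A.Monic) (hdeg : A.natDegree = 11)
    (hAH : A * H = Polynomial.X ^ 23 - 1) {C : Submodule (ZMod 9) (Fin 24 → ZMod 9)}
    (hC : ∀ c : Fin 24 → ZMod 9, c ∈ C ↔
      ((∃ f : Polynomial (ZMod 9), ∀ j : Fin 23,
          c (Fin.castSucc j) = ((f * A) %ₘ (Polynomial.X ^ 23 - 1)).coeff (j : ℕ)) ∧
        c (Fin.last 23) = - ∑ j : Fin 23, c (Fin.castSucc j)))
    (σ : Equiv.Perm (Fin 24)) (hσ' : ∀ j, σ (σ j) = j)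
    (τ : Equiv.Perm (Fin 12)) (e : ZMod 9) (he : e * e = 1)
    (hgen : ∀ (k : Fin 12) (j : Fin 23), (if (k : ℕ) ≤ j then A.coeff (j - k) else 0) =
      e * (genN (τ k) (σ j.castSucc) : ZMod 9)) (c : Fin 24 → ZMod 9) :
    c ∈ C ↔ (fun j => c (σ j)) ∈ code 9 := by
  have hcol : ∀ k : Fin 12, (genN (τ k) (σ (Fin.last 23)) : ZMod 9) =
      -∑ j : Fin 23, (genN (τ k) (σ j.castSucc) : ZMod 9) := by
    intro k
    have h := colsum (τ k)
    rw [← Equiv.sum_comp σ, Fin.sum_univ_castSucc] at h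
    exact eq_neg_of_add_eq_zero_right h
  rw [hC, cyclic_iff hA hdeg hAH (fun j => c j.castSucc), mem_code_iff (dvd_refl 9)]
  simp only [hgen]
  constructor
  · rintro ⟨⟨l, hl⟩, hlast⟩
    refine ⟨fun k => e * l (τ.symm k), funext fun j => ?_⟩
    have hj : ∀ i : Fin 24, c i = ∑ k, l k * (e * (genN (τ k) (σ i) : ZMod 9)) := by
      intro i
      induction i using Fin.lastCases with
      | last =>
        rw [hlast]
        simp only [hl, hcol]
        rw [Finset.sum_comm, ← Finset.sum_neg_distrib]
        refine Finset.sum_congr rfl fun k _ => ?_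
        rw [mul_neg, mul_neg, Finset.mul_sum, Finset.mul_sum]
      | cast i => exact hl i
    rw [hj, hσ', enc,
      ← Equiv.sum_comp τ (fun k => e * l (τ.symm k) * (genN k j : ZMod 9))]
    refine Finset.sum_congr rfl fun k _ => ?_
    rw [Equiv.symm_apply_apply]
    ring
  · rintro ⟨l, hl⟩
    have hj : ∀ i : Fin 24, c i = ∑ k, e * l (τ k) * (e * (genN (τ k) (σ i) : ZMod 9)) := by
      intro i
      have h := congrFun hl (σ i)
      simp only [hσ'] at h
      rw [h, enc, ← Equiv.sum_comp τ]
      refine Finset.sum_congr rfl fun k _ => ?_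
      linear_combination (-(l (τ k) * (genN (τ k) (σ i) : ZMod 9))) * he
    refine ⟨⟨fun k => e * l (τ k), fun j => hj _⟩, ?_⟩
    simp only [hj, hcol]
    rw [Finset.sum_comm, ← Finset.sum_neg_distrib]
    refine Finset.sum_congr rfl fun k _ => ?_
    rw [mul_neg, mul_neg, Finset.mul_sum, Finset.mul_sum]

/-- The reversal `j ↦ 22 - j` of the first 23 coordinates. -/
def flip (j : Fin 24) : Fin 24 := if j = 23 then 23 else Fin.ofNat 24 (22 - j)

lemma flip_flip : ∀ j, flip (flip j) = j := by decide

/-- Every lifted extended quadratic residue code of length 24 modulo 9 is `code 9`, up to the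
reversal of the first 23 coordinates. -/
lemma exists_perm {g : Polynomial (ZMod 3)} (hg : IsQRFactor 3 g) {f : Polynomial (ZMod 9)}
    {C : Submodule (ZMod 9) (Fin 24 → ZMod 9)}
    (hC : IsLiftedQR (by norm_num : (3:ℕ) ∣ 9) g f C) :
    ∃ σ : Equiv.Perm (Fin 24), ∀ c : Fin 24 → ZMod 9, c ∈ C ↔ (fun j => c (σ j)) ∈ code 9 := by
  obtain ⟨hf, hdeg, hdvd, hmap, hC⟩ := hC
  rcases lift_eq hg hf hdeg hdvd hmap with rfl | rfl
  · refine ⟨Equiv.refl _, lifted_iff (H := (Polynomial.X - 1) * poly gcoR) hf hdeg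
      (by rw [← poly_mul]; ring) hC _ (fun _ => rfl) (Equiv.refl _) 1 (one_mul 1) ?_⟩
    simp only [coeff_poly]
    decide +kernel
  · refine ⟨⟨flip, flip, flip_flip, flip_flip⟩, lifted_iff (H := (Polynomial.X - 1) * poly gco) hf
      hdeg (by rw [← poly_mul]; ring) hC _ flip_flip Fin.revPerm (-1) (by decide) ?_⟩
    simp only [coeff_poly]
    decide +kernel

end QR24

/-- The partial weight enumerator `D_{1,1}` for the ternary lifted QR codes of length 24. -/
theorem stmt_14 (g : Polynomial (ZMod 3)) (hg : IsQRFactor 3 g)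
    (g2 : Polynomial (ZMod 9)) (C2 : Submodule (ZMod 9) (Fin 24 → ZMod 9))
    (hC2 : IsLiftedQR (by norm_num : (3:ℕ) ∣ 9) g g2 C2) :
    divPart (((3:ℚ) ^ 12)⁻¹ •
        aeval (![X 0, X 2 - X 1, X 2 + 2 * X 1] : Fin 3 → MvPolynomial (Fin 3) ℚ) (swe 3 2 C2))
      0 1 =
      -(16192 * X 2 ^ 6 * X 0 ^ 9 * X 1 ^ 9) + 12144 * X 2 ^ 3 * X 0 ^ 9 * X 1 ^ 12
        + 12144 * X 2 ^ 3 * X 0 ^ 12 * X 1 ^ 9 - 1104 * X 0 ^ 12 * X 1 ^ 12 := by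
  obtain ⟨σ, hσ⟩ := QR24.exists_perm hg hC2
  exact QR24.divPart_eq C2 σ hσ
end
end
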